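/- arXiv:2205.04632 — 6 statements merged into one kernel-verified Lean document; each statement's English description precedes it below -/
import Mathlib

section
/- Fix constants κ, δ, γ̃ > 0 with 2κ < δ. There exists ε₀ > 0 such that for every r with 0 < r ≤ ε₀ the cubic polynomial C_r(λ) = λ³ + (δ+κ) r² λ² + (1 + γ̃ r²) r² λ + κ r⁴ (with complex variable λ) has exactly one real root and two non-real complex-conjugate roots; equivalently, its discriminant is strictly negative for all such r. -/
/-!
Write `s = r²`, `A = δ + κ`, `B = 1 + γ̃ s ≥ 1`. The discriminant of the cubic equals
`s³ (18 A κ B s + A² B² s - 4 A³ κ s² - 27 κ² s - 4 B³)`. Since `B ≤ B² ≤ B³`, the bracket is at most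
`B² ((18 A κ + A²) s - 4)`, which is negative once `(18 A κ + A²) s < 4`, hence for small `r`.

A real cubic with positive coefficients has a real root `x` by the intermediate value theorem
(`exists_real_root`). Dividing by `λ - x` leaves `λ² + p λ + q` with `p = a + x` and
`q = b + x p`, and the discriminant of the cubic factors as `(p² - 4 q) (x² + p x + q)²`
(`cubicDisc_eq_of_root`). So a negative discriminant forces `p² < 4 q`: the quadratic factor is
positive on the real line and has a conjugate pair of non-real roots.
-/

/-!
STATEMENT 6. The characteristic cubic `C_r(λ) = λ³ + (δ+κ)r²λ² + (1+γ̃r²)r²λ + κr⁴`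
of the linear Blackstock model has, for all sufficiently small `r > 0`, exactly one
real root and two non-real complex-conjugate roots; equivalently its discriminant
`Δ = 18abc − 4a³c + a²b² − 4b³ − 27c²` is strictly negative.
-/

noncomputable section

/-- The characteristic cubic of the linear Blackstock model in the Fourier space,
as a function of the complex variable `z`. -/
def blackstockCubic (κ δ γt r : ℝ) (z : ℂ) : ℂ :=
  z ^ 3 + (((δ + κ) * r ^ 2 : ℝ) : ℂ) * z ^ 2
    + (((1 + γt * r ^ 2) * r ^ 2 : ℝ) : ℂ) * z + ((κ * r ^ 4 : ℝ) : ℂ)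

/-- The discriminant `Δ = 18abc − 4a³c + a²b² − 4b³ − 27c²` of the monic cubic
`λ³ + aλ² + bλ + c`. -/
def cubicDisc (a b c : ℝ) : ℝ :=
  18 * a * b * c - 4 * a ^ 3 * c + a ^ 2 * b ^ 2 - 4 * b ^ 3 - 27 * c ^ 2

theorem exists_real_root {a b c : ℝ} (ha : 0 < a) (hb : 0 < b) (hc : 0 < c) :
    ∃ x : ℝ, x ^ 3 + a * x ^ 2 + b * x + c = 0 := by
  -- At `-(a + c / b)` the cubic is `-(c / b) (a + c / b)² - a b < 0`; at `0` it is `c > 0`.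
  have hm : 0 < c / b := div_pos hc hb
  have hcb : b * (c / b) = c := by field_simp
  generalize c / b = m at hm hcb
  have hcont : ContinuousOn (fun x : ℝ => x ^ 3 + a * x ^ 2 + b * x + c)
      (Set.Icc (-(a + m)) 0) := by fun_prop
  have hle : -(a + m) ≤ 0 := by linarith
  have hneg : (-(a + m)) ^ 3 + a * (-(a + m)) ^ 2 + b * -(a + m) + c ≤ 0 := by
    have h1 : 0 < m * (a + m) ^ 2 := by positivity
    have h2 : 0 < a * b := by positivity
    linear_combination h1 + h2 - hcb
  obtain ⟨x, -, hx⟩ := intermediate_value_Icc hle hcont ⟨hneg, by simpa using hc.le⟩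
  exact ⟨x, hx⟩

/-- With a root `x`, the discriminant is that of the quadratic cofactor times the square of the
cofactor's value at `x`. -/
theorem cubicDisc_eq_of_root {a b c x : ℝ} (hx : x ^ 3 + a * x ^ 2 + b * x + c = 0) :
    cubicDisc a b c = ((a + x) ^ 2 - 4 * (b + x * (a + x))) *
      (x ^ 2 + (a + x) * x + (b + x * (a + x))) ^ 2 := by
  obtain rfl : c = -(x ^ 3 + a * x ^ 2 + b * x) := by linarith
  unfold cubicDisc
  ring

theorem one_real_root_and_conj_pair {a b c : ℝ} (ha : 0 < a) (hb : 0 < b) (hc : 0 < c)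
    (hD : cubicDisc a b c < 0) :
    (∃! x : ℝ, (x : ℂ) ^ 3 + (a : ℂ) * (x : ℂ) ^ 2 + (b : ℂ) * (x : ℂ) + (c : ℂ) = 0) ∧
    ∃ z : ℂ, 0 < z.im ∧ z ^ 3 + (a : ℂ) * z ^ 2 + (b : ℂ) * z + (c : ℂ) = 0 ∧
      (starRingEnd ℂ z) ^ 3 + (a : ℂ) * (starRingEnd ℂ z) ^ 2 + (b : ℂ) * starRingEnd ℂ z
        + (c : ℂ) = 0 := by
  obtain ⟨x, hx⟩ := exists_real_root ha hb hc
  have hpq : (a + x) ^ 2 - 4 * (b + x * (a + x)) < 0 := by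
    rw [cubicDisc_eq_of_root hx] at hD
    by_contra! h
    exact absurd hD (not_lt.mpr (mul_nonneg h (sq_nonneg _)))
  have hxC : (x : ℂ) ^ 3 + (a : ℂ) * (x : ℂ) ^ 2 + (b : ℂ) * (x : ℂ) + (c : ℂ) = 0 := by
    exact_mod_cast hx
  constructor
  · refine ⟨x, hxC, fun y hy => ?_⟩
    have hy' : y ^ 3 + a * y ^ 2 + b * y + c = 0 := by exact_mod_cast hy
    have hfac : (y - x) * (y ^ 2 + (a + x) * y + (b + x * (a + x))) = 0 := by
      linear_combination hy' - hx
    have hpos : 0 < y ^ 2 + (a + x) * y + (b + x * (a + x)) := by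
      nlinarith [sq_nonneg (2 * y + (a + x))]
    exact sub_eq_zero.mp ((mul_eq_zero.mp hfac).resolve_right hpos.ne')
  · have hd : 0 < 4 * (b + x * (a + x)) - (a + x) ^ 2 := by linarith
    obtain ⟨w, hw, hw2⟩ : ∃ w : ℝ, 0 < w ∧ w ^ 2 = 4 * (b + x * (a + x)) - (a + x) ^ 2 :=
      ⟨_, Real.sqrt_pos.mpr hd, Real.sq_sqrt hd.le⟩
    have hw2C : (w : ℂ) ^ 2 = 4 * (b + x * (a + x)) - (a + x) ^ 2 := by exact_mod_cast hw2
    -- The quadratic formula for the cofactor, with `w² = 4 q - p²`.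
    let z : ℂ := ⟨-(a + x) / 2, w / 2⟩
    have hz : z = -(a + x) / 2 + w / 2 * Complex.I := by
      apply Complex.ext <;> simp [z]
    have hquad : z ^ 2 + (a + x) * z + (b + x * (a + x)) = 0 := by
      rw [hz]
      linear_combination (w : ℂ) ^ 2 / 4 * Complex.I_sq - hw2C / 4
    have hroot : z ^ 3 + (a : ℂ) * z ^ 2 + (b : ℂ) * z + (c : ℂ) = 0 := by
      linear_combination (z - x) * hquad + hxC
    refine ⟨z, half_pos hw, hroot, ?_⟩
    simpa using congrArg (starRingEnd ℂ) hroot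

theorem blackstock_disc_neg {κ A γt s : ℝ} (hκ : 0 < κ) (hA : 0 < A) (hγt : 0 < γt)
    (hs : 0 < s) (hsmall : (18 * A * κ + A ^ 2) * s < 4) :
    cubicDisc (A * s) ((1 + γt * s) * s) (κ * s ^ 2) < 0 := by
  have hB : 1 ≤ 1 + γt * s := by linarith [mul_pos hγt hs]
  unfold cubicDisc
  generalize 1 + γt * s = B at hB
  have hB0 : 0 < B := by linarith
  have h1 : 0 ≤ 18 * A * κ * s * (B * (B - 1)) := by
    have := sub_nonneg.mpr hB
    positivity
  have h2 : 0 ≤ 4 * (B ^ 2 * (B - 1)) := by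
    have := sub_nonneg.mpr hB
    positivity
  have h3 : 0 < B ^ 2 * (4 - (18 * A * κ + A ^ 2) * s) :=
    mul_pos (by positivity) (by linarith)
  have h4 : 0 < 4 * A ^ 3 * κ * s ^ 2 + 27 * κ ^ 2 * s := by positivity
  have key : 18 * A * κ * B * s + A ^ 2 * B ^ 2 * s - 4 * A ^ 3 * κ * s ^ 2 - 27 * κ ^ 2 * s
      - 4 * B ^ 3 < 0 := by linarith
  have := mul_neg_of_pos_of_neg (pow_pos hs 3) key
  linear_combination this

theorem blackstock_cubic_one_real_two_conjugate_roots
    (κ δ γt : ℝ) (hκ : 0 < κ) (hδ : 0 < δ) (hγt : 0 < γt) (hκδ : 2 * κ < δ) :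
    ∃ ε₀ : ℝ, 0 < ε₀ ∧ ∀ r : ℝ, 0 < r → r ≤ ε₀ →
      cubicDisc ((δ + κ) * r ^ 2) ((1 + γt * r ^ 2) * r ^ 2) (κ * r ^ 4) < 0 ∧
      (∃! x : ℝ, blackstockCubic κ δ γt r (x : ℂ) = 0) ∧
      (∃ z : ℂ, 0 < z.im ∧ blackstockCubic κ δ γt r z = 0 ∧
        blackstockCubic κ δ γt r (starRingEnd ℂ z) = 0) := by
  have hA : 0 < δ + κ := by linarith
  have hK : 0 < 18 * (δ + κ) * κ + (δ + κ) ^ 2 := by positivity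
  refine ⟨1 / (1 + (18 * (δ + κ) * κ + (δ + κ) ^ 2)), by positivity, fun r hr hrε => ?_⟩
  have hs : 0 < r ^ 2 := by positivity
  have hrK : r * (1 + (18 * (δ + κ) * κ + (δ + κ) ^ 2)) ≤ 1 :=
    (le_div_iff₀ (by positivity)).mp hrε
  have hr1 : r ≤ 1 := by linarith [mul_pos hr hK]
  have hsmall : (18 * (δ + κ) * κ + (δ + κ) ^ 2) * r ^ 2 < 4 := by
    have hsr : r ^ 2 ≤ r := by nlinarith
    have := mul_le_mul_of_nonneg_left hsr hK.le
    linarith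
  have hD : cubicDisc ((δ + κ) * r ^ 2) ((1 + γt * r ^ 2) * r ^ 2) (κ * r ^ 4) < 0 := by
    have h := blackstock_disc_neg hκ hA hγt hs hsmall
    rwa [← pow_mul] at h
  exact ⟨hD, one_real_root_and_conj_pair (by positivity) (by positivity) (by positivity) hD⟩

end
end

section
/- Fix constants κ, δ, γ̃ > 0 with 2κ < δ, and set δ̂ := κγ̃ − κ²δ. There exist ε₀ > 0 and C > 0 such that for every r with 0 < r ≤ ε₀, the cubic C_r(λ) = λ³ + (δ+κ) r² λ² + (1 + γ̃ r²) r² λ + κ r⁴ has a unique real root λ₁(r), and it satisfies |λ₁(r) + κ r² − δ̂ r⁴| ≤ C r⁵. -/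
/-!
With `s = r²` and `x = s y`, the equation `C_r(x) = 0` becomes
`s (y³ + a y² + γ̃ y) + y + κ = 0` with `a = δ + κ`. Once `s a² ≤ 1` the left-hand side is strictly
increasing in `y` (its difference quotients are positive, `rescaled_unique`), and it changes sign on
`[-2κ, 0]`, so it has a single zero, which lies in `[-2κ, 0]`. Writing `g y = y³ + a y² + γ̃ y`, one
has `y + κ = -s g(y)` and `g(-κ) = -δ̂`, whence `y + κ - δ̂ s = -s (g(y) - g(-κ)) = s² g(y) h(y)`,
where `g(y) - g(-κ) = (y + κ) h(y)`. Boundedness of `y` makes this `O(s²)`, so the remainder in `x`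
is in fact `O(r⁶)`.
-/

/-!
STATEMENT 7. Expansion of the unique real root `λ₁(r) = −κr² + δ̂r⁴ + O(r⁵)`
of the characteristic cubic of the linear Blackstock model, with `δ̂ = κγ̃ − κ²δ`.
-/

noncomputable section

/-- The real form of the cubic after the rescaling `x = r² y`. -/
lemma blackstockCubic_rescaled (κ δ γt r y : ℝ) (hr : 0 < r) :
    blackstockCubic κ δ γt r ((r ^ 2 * y : ℝ) : ℂ) = 0 ↔
      r ^ 2 * (y ^ 3 + (δ + κ) * y ^ 2 + γt * y) + y + κ = 0 := by
  have h : blackstockCubic κ δ γt r ((r ^ 2 * y : ℝ) : ℂ) =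
      ((r ^ 4 * (r ^ 2 * (y ^ 3 + (δ + κ) * y ^ 2 + γt * y) + y + κ) : ℝ) : ℂ) := by
    unfold blackstockCubic
    push_cast
    ring
  rw [h, Complex.ofReal_eq_zero, mul_eq_zero]
  exact or_iff_right (by positivity)

lemma rescaled_unique {a γ s κ y z : ℝ} (hγ : 0 < γ) (hs : 0 < s) (hsa : s * a ^ 2 ≤ 1)
    (hy : s * (y ^ 3 + a * y ^ 2 + γ * y) + y + κ = 0)
    (hz : s * (z ^ 3 + a * z ^ 2 + γ * z) + z + κ = 0) : y = z := by
  have hprod : (y - z) * (s * (y ^ 2 + y * z + z ^ 2 + a * (y + z)) + 1 + γ * s) = 0 := by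
    linear_combination hy - hz
  -- Completing squares: `y² + yz + z² + a(y + z) ≥ -a²/3`.
  have hsq : -(a ^ 2 / 3) ≤ y ^ 2 + y * z + z ^ 2 + a * (y + z) := by
    nlinarith [sq_nonneg (y - z), sq_nonneg (3 * (y + z) + 2 * a)]
  have hmul := mul_le_mul_of_nonneg_left hsq hs.le
  have hγs : 0 < γ * s := mul_pos hγ hs
  have hpos : 0 < s * (y ^ 2 + y * z + z ^ 2 + a * (y + z)) + 1 + γ * s := by
    linarith
  rcases mul_eq_zero.mp hprod with h | h
  · linarith
  · exact absurd h (ne_of_gt hpos)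

/-- The cofactor of `y` in the rescaled cubic minus `κ` stays away from zero. -/
lemma rescaled_factor {a γ s : ℝ} (y : ℝ) (hγ : 0 < γ) (hs : 0 < s) (hsa : s * a ^ 2 ≤ 1) :
    3 / 4 ≤ s * (y ^ 2 + a * y + γ) + 1 := by
  have hsq : -(a ^ 2 / 4) ≤ y ^ 2 + a * y := by nlinarith [sq_nonneg (2 * y + a)]
  have hmul := mul_le_mul_of_nonneg_left hsq hs.le
  have hγs : 0 < s * γ := mul_pos hs hγ
  linarith

lemma rescaled_mem {a γ s κ y : ℝ} (hκ : 0 < κ) (hγ : 0 < γ) (hs : 0 < s) (hsa : s * a ^ 2 ≤ 1)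
    (hy : s * (y ^ 3 + a * y ^ 2 + γ * y) + y + κ = 0) : -(2 * κ) ≤ y ∧ y ≤ 0 := by
  have hq := rescaled_factor y hγ hs hsa
  have hyq : y * (s * (y ^ 2 + a * y + γ) + 1) = -κ := by linear_combination hy
  generalize s * (y ^ 2 + a * y + γ) + 1 = q at hq hyq
  have h0 : y ≤ 0 := by
    by_contra! h
    nlinarith [mul_pos h (by linarith : 0 < q)]
  refine ⟨?_, h0⟩
  nlinarith [mul_nonneg (neg_nonneg.mpr h0) (sub_nonneg.mpr hq)]

lemma rescaled_exists {a γ s κ : ℝ} (hκ : 0 < κ) (hγ : 0 < γ) (hs : 0 < s)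
    (hsa : s * a ^ 2 ≤ 1) : ∃ y : ℝ, s * (y ^ 3 + a * y ^ 2 + γ * y) + y + κ = 0 := by
  have hc : ContinuousOn (fun y : ℝ => s * (y ^ 3 + a * y ^ 2 + γ * y) + y + κ)
      (Set.Icc (-(2 * κ)) 0) := by fun_prop
  have hle : -(2 * κ) ≤ 0 := by linarith
  have hq := rescaled_factor (-(2 * κ)) hγ hs hsa
  have hneg := mul_le_mul_of_nonneg_left hq (by positivity : 0 ≤ 2 * κ)
  obtain ⟨y, -, hy⟩ := intermediate_value_Icc hle hc (show (0 : ℝ) ∈ Set.Icc _ _ from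
    ⟨by ring_nf at hneg ⊢; linarith, by ring_nf; exact hκ.le⟩)
  exact ⟨y, hy⟩

lemma rescaled_bound {κ δ γ s y : ℝ} (hκ : 0 < κ) (hδ : 0 < δ) (hγ : 0 < γ)
    (hy : s * (y ^ 3 + (δ + κ) * y ^ 2 + γ * y) + y + κ = 0)
    (hl : -(2 * κ) ≤ y) (hu : y ≤ 0) :
    |y + κ - (κ * γ - κ ^ 2 * δ) * s| ≤ s ^ 2 *
      ((8 * κ ^ 3 + (δ + κ) * (4 * κ ^ 2) + γ * (2 * κ)) *
        (4 * κ ^ 2 + κ * (2 * κ) + κ ^ 2 + (δ + κ) * (2 * κ + κ) + γ)) := by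
  have hid : y + κ - (κ * γ - κ ^ 2 * δ) * s = s ^ 2 *
      ((y ^ 3 + (δ + κ) * y ^ 2 + γ * y) *
        (y ^ 2 - κ * y + κ ^ 2 + (δ + κ) * (y - κ) + γ)) := by
    linear_combination (1 - s * (y ^ 2 - κ * y + κ ^ 2 + (δ + κ) * (y - κ) + γ)) * hy
  -- The bounds are clearest in `w = -y ∈ [0, 2κ]`.
  obtain ⟨w, rfl⟩ : ∃ w, y = -w := ⟨-y, by ring⟩
  have hw0 : 0 ≤ w := by linarith
  have hw : w ≤ 2 * κ := by linarith
  have h2 : w ^ 2 ≤ 4 * κ ^ 2 := by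
    calc w ^ 2 ≤ (2 * κ) ^ 2 := by gcongr
      _ = _ := by ring
  have h3 : w ^ 3 ≤ 8 * κ ^ 3 := by
    calc w ^ 3 ≤ (2 * κ) ^ 3 := by gcongr
      _ = _ := by ring
  have ha2 : (δ + κ) * w ^ 2 ≤ (δ + κ) * (4 * κ ^ 2) := by gcongr
  have ha1 : (δ + κ) * w ≤ (δ + κ) * (2 * κ) := by gcongr
  have hγ1 : γ * w ≤ γ * (2 * κ) := by gcongr
  have hκ1 : κ * w ≤ κ * (2 * κ) := by gcongr
  have p1 : 0 ≤ w ^ 3 := by positivity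
  have p2 : 0 ≤ (δ + κ) * w ^ 2 := by positivity
  have p3 : 0 ≤ γ * w := by positivity
  have p4 : 0 ≤ κ * w := by positivity
  have p5 : 0 ≤ (δ + κ) * w := by positivity
  have p6 : 0 ≤ (δ + κ) * κ := by positivity
  rw [hid, abs_mul, abs_mul, abs_of_nonneg (sq_nonneg s)]
  gcongr
  · rw [abs_le]
    constructor <;> ring_nf at * <;> linarith
  · rw [abs_le]
    constructor <;> nlinarith

theorem blackstock_cubic_real_root_expansion
    (κ δ γt : ℝ) (hκ : 0 < κ) (hδ : 0 < δ) (hγt : 0 < γt) (hκδ : 2 * κ < δ) :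
    ∃ ε₀ C : ℝ, 0 < ε₀ ∧ 0 < C ∧ ∀ r : ℝ, 0 < r → r ≤ ε₀ →
      (∃! x : ℝ, blackstockCubic κ δ γt r (x : ℂ) = 0) ∧
      (∀ x : ℝ, blackstockCubic κ δ γt r (x : ℂ) = 0 →
        |x + κ * r ^ 2 - (κ * γt - κ ^ 2 * δ) * r ^ 4| ≤ C * r ^ 5) := by
  -- The choice `ε₀ = 1 / (1 + (δ + κ))` ensures both `r ≤ 1` and `r² (δ + κ)² ≤ 1`.
  refine ⟨1 / (1 + (δ + κ)), (8 * κ ^ 3 + (δ + κ) * (4 * κ ^ 2) + γt * (2 * κ)) *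
    (4 * κ ^ 2 + κ * (2 * κ) + κ ^ 2 + (δ + κ) * (2 * κ + κ) + γt),
    by positivity, by positivity, ?_⟩
  intro r hr hrε
  have ha : 0 < δ + κ := by linarith
  rw [le_div_iff₀ (by linarith)] at hrε
  have hra0 : 0 < r * (δ + κ) := mul_pos hr ha
  have hr1 : r ≤ 1 := by linarith
  have hra : r * (δ + κ) ≤ 1 := by linarith
  have hs : 0 < r ^ 2 := by positivity
  have hsa : r ^ 2 * (δ + κ) ^ 2 ≤ 1 := by
    rw [← mul_pow]
    exact pow_le_one₀ hra0.le hra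
  have hscale : ∀ x : ℝ, ∃ y, x = r ^ 2 * y := fun x => ⟨x / r ^ 2, by field_simp⟩
  refine ⟨?_, ?_⟩
  · obtain ⟨y, hy⟩ := rescaled_exists hκ hγt hs hsa
    refine ⟨r ^ 2 * y, (blackstockCubic_rescaled κ δ γt r y hr).mpr hy, ?_⟩
    intro x hx
    obtain ⟨z, rfl⟩ := hscale x
    rw [rescaled_unique hγt hs hsa ((blackstockCubic_rescaled κ δ γt r z hr).mp hx) hy]
  · intro x hx
    obtain ⟨y, rfl⟩ := hscale x
    have hy := (blackstockCubic_rescaled κ δ γt r y hr).mp hx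
    obtain ⟨hl, hu⟩ := rescaled_mem hκ hγt hs hsa hy
    have hb := rescaled_bound hκ hδ hγt hy hl hu
    have hfac : r ^ 2 * y + κ * r ^ 2 - (κ * γt - κ ^ 2 * δ) * r ^ 4 =
        r ^ 2 * (y + κ - (κ * γt - κ ^ 2 * δ) * r ^ 2) := by ring
    rw [hfac, abs_mul, abs_of_pos hs]
    refine (mul_le_mul_of_nonneg_left hb hs.le).trans ?_
    rw [← mul_assoc, mul_comm]
    have hpow : r ^ 2 * (r ^ 2) ^ 2 ≤ r ^ 5 := by
      calc r ^ 2 * (r ^ 2) ^ 2 = r ^ 5 * r := by ring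
        _ ≤ r ^ 5 * 1 := by gcongr
        _ = r ^ 5 := mul_one _
    gcongr


end
end

section
/- Fix constants κ, δ, γ̃ > 0 with 2κ < δ, and set δ̂ := κγ̃ − κ²δ. There exist ε₀ > 0 and C > 0 such that for every r with 0 < r ≤ ε₀, the two non-real roots of the cubic C_r(λ) = λ³ + (δ+κ) r² λ² + (1 + γ̃ r²) r² λ + κ r⁴ form a conjugate pair λ_R(r) ± i λ_I(r) with λ_I(r) > 0, and they satisfy |λ_R(r) + (δ/2) r² + (δ̂/2) r⁴| ≤ C r⁵ and |λ_I(r) − r − ((4δ̂ − κδ²)/(8κ)) r³| ≤ C r⁵. -/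
/-!
Put `x = r²` and look for the real root in the form `-x u`. After division by `x²` the cubic becomes
`κ - u + x P(u) = 0` with `P(u) = -u³ + (δ + κ) u² - γ̃ u`, which for small `x` has a root
`u ∈ (0, 2κ)` by the intermediate value theorem (`exists_rescaled_root`). The equation gives
`u - κ = O(x)`, and, inserted into itself, `u = κ - δ̂ x + O(x²)` since `P(κ) = -δ̂`.

Dividing out the linear factor leaves `z² + b z + c` with `b = (δ + κ - u) x` and
`c = x + γ̃ x² - u (δ + κ - u) x²`. Hence `λ_R = -b / 2` inherits its expansion from that of `u`, and
`λ_I² = c - b² / 4 = x + x² q(u)` with `q` a quadratic polynomial satisfying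
`q(κ) = (4δ̂ - κδ²) / (4κ)`. The expansion of `λ_I` follows by comparing squares
(`abs_sub_le_of_sq`): `λ_I² - (r + A r³)² = O(r⁶)` while `λ_I + r + A r³ ≥ r / 2`.
-/

/-!
STATEMENT 8. Expansion of the pair of non-real conjugate roots
`λ_R(r) ± iλ_I(r)` (with `λ_I(r) > 0`) of the characteristic cubic of the
linear Blackstock model: `λ_R(r) = −(δ/2)r² − (δ̂/2)r⁴ + O(r⁵)` and
`λ_I(r) = r + ((4δ̂−κδ²)/(8κ))r³ + O(r⁵)`, with `δ̂ = κγ̃ − κ²δ`.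
-/

noncomputable section

/-- The rescaled real root: `-r² u` solves the cubic when `x = r²`. -/
lemma exists_rescaled_root {κ d γ x : ℝ} (hκ : 0 < κ) (hx : 0 ≤ x)
    (hs : x * (4 * κ * d) < 1) (hγ : 0 < γ) :
    ∃ u : ℝ, 0 < u ∧ u < 2 * κ ∧ κ - u + x * (-u ^ 3 + d * u ^ 2 - γ * u) = 0 := by
  have hc : ContinuousOn (fun u : ℝ => κ - u + x * (-u ^ 3 + d * u ^ 2 - γ * u))
      (Set.Icc 0 (2 * κ)) := by fun_prop
  have hmem : (0 : ℝ) ∈ Set.Ioo (κ - 2 * κ + x * (-(2 * κ) ^ 3 + d * (2 * κ) ^ 2 - γ * (2 * κ)))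
      (κ - 0 + x * (-0 ^ 3 + d * 0 ^ 2 - γ * 0)) := by
    constructor
    · have h1 : 0 ≤ x * (8 * κ ^ 3 + 2 * γ * κ) := by positivity
      have h2 := mul_lt_mul_of_pos_right hs hκ
      nlinarith
    · simpa using hκ
  obtain ⟨u, hu, h0⟩ := intermediate_value_Ioo' (by positivity : (0 : ℝ) ≤ 2 * κ) hc hmem
  exact ⟨u, hu.1, hu.2, h0⟩

/-- Two numbers with sum at least `r / 2` whose squares differ by `O(r⁶)` differ by `O(r⁵)`. -/
lemma abs_sub_le_of_sq {r s t B : ℝ} (hr : 0 < r) (hst : r / 2 ≤ s + t)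
    (h : |s ^ 2 - t ^ 2| ≤ B * r ^ 6) : |s - t| ≤ 2 * B * r ^ 5 := by
  have h1 : |s - t| * (r / 2) ≤ |s - t| * (s + t) :=
    mul_le_mul_of_nonneg_left hst (abs_nonneg _)
  have h2 : |s - t| * (s + t) = |s ^ 2 - t ^ 2| := by
    rw [show s ^ 2 - t ^ 2 = (s - t) * (s + t) by ring, abs_mul,
      abs_of_nonneg (by linarith : 0 ≤ s + t)]
  have h3 : |s - t| * (r / 2) ≤ 2 * B * r ^ 5 * (r / 2) := by
    calc _ ≤ B * r ^ 6 := by linarith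
      _ = _ := by ring
  exact le_of_mul_le_mul_right h3 (by positivity)

/-- Factorization of the cubic over `ℂ` once the rescaled real root `u` is known. -/
lemma blackstockCubic_factor {κ δ γ r u l : ℝ}
    (hu : κ - u + r ^ 2 * (-u ^ 3 + (δ + κ) * u ^ 2 - γ * u) = 0)
    (hl : l ^ 2 = r ^ 2
      + r ^ 4 * (γ - u * (δ + κ - u) - (δ + κ - u) ^ 2 / 4)) (z : ℂ) :
    blackstockCubic κ δ γ r z = (z + ((r ^ 2 * u : ℝ) : ℂ))
      * (z - (((-(δ + κ - u) * r ^ 2 / 2 : ℝ) : ℂ) + (l : ℂ) * Complex.I))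
      * (z - (((-(δ + κ - u) * r ^ 2 / 2 : ℝ) : ℂ) - (l : ℂ) * Complex.I)) := by
  have hu' := congrArg (fun t : ℝ => (t : ℂ)) hu
  have hl' := congrArg (fun t : ℝ => (t : ℂ)) hl
  unfold blackstockCubic
  push_cast at hu' hl' ⊢
  linear_combination (r : ℂ) ^ 4 * hu' - (z + r ^ 2 * u) * hl'
    + (z + r ^ 2 * u) * l ^ 2 * Complex.I_sq

theorem blackstock_cubic_complex_roots_expansion
    (κ δ γt : ℝ) (hκ : 0 < κ) (hδ : 0 < δ) (hγt : 0 < γt) (hκδ : 2 * κ < δ) :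
    ∃ ε₀ C : ℝ, 0 < ε₀ ∧ 0 < C ∧ ∀ r : ℝ, 0 < r → r ≤ ε₀ →
      ∃ lR lI : ℝ, 0 < lI ∧
        blackstockCubic κ δ γt r ((lR : ℂ) + (lI : ℂ) * Complex.I) = 0 ∧
        blackstockCubic κ δ γt r ((lR : ℂ) - (lI : ℂ) * Complex.I) = 0 ∧
        (∀ z : ℂ, blackstockCubic κ δ γt r z = 0 → z.im ≠ 0 →
          z = (lR : ℂ) + (lI : ℂ) * Complex.I ∨ z = (lR : ℂ) - (lI : ℂ) * Complex.I) ∧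
        |lR + δ / 2 * r ^ 2 + (κ * γt - κ ^ 2 * δ) / 2 * r ^ 4| ≤ C * r ^ 5 ∧
        |lI - r - (4 * (κ * γt - κ ^ 2 * δ) - κ * δ ^ 2) / (8 * κ) * r ^ 3| ≤ C * r ^ 5 := by
  set d := δ + κ with hd
  set e := κ * γt - κ ^ 2 * δ with he
  set A := (4 * e - κ * δ ^ 2) / (8 * κ) with hA
  have hd0 : 0 < d := by positivity
  -- `M` bounds `|P|`, `L` and `K` are Lipschitz constants of `P` and `q` at `κ`, and `-Q`
  -- bounds `q` from below, all on `[0, 2κ]`. The size of `N` makes `r² Q ≤ 1 / 2` for `r ≤ 1 / N`.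
  set M := 8 * κ ^ 3 + 4 * κ ^ 2 * d + 2 * κ * γt with hM
  set L := 7 * κ ^ 2 + 3 * κ * d + γt with hL
  set Q := γt + 3 * κ ^ 2 + κ * d + d ^ 2 / 4 with hQ
  set K := 9 * κ / 4 + d / 2 with hK
  have hM0 : 0 < M := by positivity
  have hL0 : 0 < L := by positivity
  have hQ0 : 0 < Q := by positivity
  have hK0 : 0 < K := by positivity
  set N := 2 + 2 * Q + 4 * κ * d with hN
  have hN0 : 0 < N := by positivity
  have hA2 : 2 * A = 3 * κ ^ 2 / 4 - κ * d / 2 - d ^ 2 / 4 + γt := by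
    rw [hA, he, hd]; field_simp; ring
  refine ⟨1 / N, L * M + 2 * (K * M + A ^ 2), by positivity, by positivity, ?_⟩
  intro r hr hrN
  have hrN' : r * N ≤ 1 := by rwa [le_div_iff₀ hN0] at hrN
  have hr1 : r ≤ 1 := by
    have h1 : 0 < r * Q := by positivity
    have h2 : 0 < r * (4 * κ * d) := by positivity
    rw [hN] at hrN'; linarith
  have hxr : r ^ 2 ≤ r := by nlinarith
  have hx0 : 0 < r ^ 2 := by positivity
  have hxN : r ^ 2 * N ≤ 1 := (mul_le_mul_of_nonneg_right hxr hN0.le).trans hrN'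
  have hxQ : r ^ 2 * Q ≤ 1 / 2 := by
    have : 0 < r ^ 2 * (4 * κ * d) := by positivity
    rw [hN] at hxN; linarith
  have hxd : r ^ 2 * (4 * κ * d) < 1 := by
    have : 0 < r ^ 2 * Q := by positivity
    rw [hN] at hxN; linarith
  obtain ⟨u, hu0, hu2, hu⟩ := exists_rescaled_root hκ hx0.le hxd hγt
  -- first-order estimate of `u`
  have hu1 : |u - κ| ≤ M * r ^ 2 := by
    have h1 : u - κ = (-u ^ 3 + d * u ^ 2 - γt * u) * r ^ 2 := by linear_combination -hu
    rw [h1, abs_mul, abs_of_pos hx0]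
    refine mul_le_mul_of_nonneg_right ?_ hx0.le
    have p3 : u ^ 3 ≤ (2 * κ) ^ 3 := by gcongr
    have p2 : d * u ^ 2 ≤ d * (2 * κ) ^ 2 := by gcongr
    have p1 : γt * u ≤ γt * (2 * κ) := by gcongr
    have q3 : 0 < u ^ 3 := by positivity
    have q2 : 0 < d * u ^ 2 := by positivity
    have q1 : 0 < γt * u := by positivity
    have m3 : 0 < κ ^ 3 := by positivity
    have m2 : 0 < κ ^ 2 * d := by positivity
    have m1 : 0 < κ * γt := by positivity
    rw [abs_le, hM]; constructor <;> linarith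
  -- second-order estimate, from inserting the first one into the equation
  have hu3 : |u - κ + e * r ^ 2| ≤ L * M * r ^ 4 := by
    have h1 : u - κ + e * r ^ 2
        = (-(u ^ 2 + u * κ + κ ^ 2) + d * (u + κ) - γt) * (u - κ) * r ^ 2 := by
      rw [he]
      rw [hd] at hu ⊢
      linear_combination -hu
    have h2 : |-(u ^ 2 + u * κ + κ ^ 2) + d * (u + κ) - γt| ≤ L := by
      have p2 : u ^ 2 ≤ (2 * κ) ^ 2 := by gcongr
      have p1 : u * κ ≤ 2 * κ * κ := by gcongr
      have p0 : d * u ≤ d * (2 * κ) := by gcongr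
      have q3 : 0 < u ^ 2 := by positivity
      have m2 : 0 < κ ^ 2 := by positivity
      have q2 : 0 < u * κ := by positivity
      have q1 : 0 < d * u := by positivity
      have q0 : 0 < d * κ := by positivity
      rw [abs_le, hL]; constructor <;> linarith
    rw [h1, abs_mul, abs_mul, abs_of_pos hx0]
    calc _ ≤ L * (M * r ^ 2) * r ^ 2 := by gcongr
      _ = _ := by ring
  set q := γt - u * (d - u) - (d - u) ^ 2 / 4 with hq
  have hq' : q = 3 * u ^ 2 / 4 - u * d / 2 - d ^ 2 / 4 + γt := by rw [hq]; ring
  have hqQ : -Q ≤ q := by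
    have p0 : u * d ≤ 2 * κ * d := by gcongr
    rw [hq', hQ]; linarith [sq_nonneg u, sq_nonneg κ]
  have hAQ : -Q ≤ 2 * A := by
    have : 0 < κ * d := by positivity
    rw [hA2, hQ]; linarith [sq_nonneg κ]
  have hqA : |q - 2 * A| ≤ K * M * r ^ 2 := by
    have h1 : q - 2 * A = (3 * (u + κ) / 4 - d / 2) * (u - κ) := by rw [hq', hA2]; ring
    have h2 : |3 * (u + κ) / 4 - d / 2| ≤ K := by
      rw [abs_le, hK]; constructor <;> linarith
    rw [h1, abs_mul]
    calc _ ≤ K * (M * r ^ 2) := by gcongr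
      _ = _ := by ring
  have hD : 0 < r ^ 2 + r ^ 4 * q := by
    have h1 : r ^ 2 * (-Q) ≤ r ^ 2 * q := by gcongr
    have h2 : 0 < r ^ 2 * (1 + r ^ 2 * q) := mul_pos hx0 (by linarith)
    linarith
  have hl0 := Real.sqrt_pos.mpr hD
  have hl := Real.sq_sqrt hD.le
  set l := Real.sqrt (r ^ 2 + r ^ 4 * q)
  have hfac := blackstockCubic_factor (κ := κ) (δ := δ) hu hl
  rw [← hd] at hfac
  refine ⟨-(d - u) * r ^ 2 / 2, l, hl0, ?_, ?_, ?_, ?_, ?_⟩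
  · rw [hfac]; ring
  · rw [hfac]; ring
  · intro z hz him
    rw [hfac, mul_eq_zero, mul_eq_zero] at hz
    rcases hz with (h | h) | h
    · -- the linear factor only vanishes at a real number
      refine absurd ?_ him
      simpa only [Complex.add_im, Complex.ofReal_im, add_zero, Complex.zero_im]
        using congrArg Complex.im h
    · exact Or.inl (sub_eq_zero.mp h)
    · exact Or.inr (sub_eq_zero.mp h)
  · have h1 : -(d - u) * r ^ 2 / 2 + δ / 2 * r ^ 2 + e / 2 * r ^ 4
        = (u - κ + e * r ^ 2) * (r ^ 2 / 2) := by rw [hd]; ring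
    rw [h1, abs_mul, abs_of_pos (by positivity : 0 < r ^ 2 / 2)]
    have h6 : r ^ 6 ≤ r ^ 5 := pow_le_pow_of_le_one hr.le hr1 (by norm_num)
    calc _ ≤ L * M * r ^ 4 * (r ^ 2 / 2) := by gcongr
      _ = L * M / 2 * r ^ 6 := by ring
      _ ≤ L * M / 2 * r ^ 5 := by gcongr
      _ ≤ _ := by
        gcongr
        have : 0 < L * M := by positivity
        have : 0 < K * M := by positivity
        linarith [sq_nonneg A]
  · have hst : r / 2 ≤ l + (r + A * r ^ 3) := by
      have h1 : r ^ 2 * (-Q) ≤ r ^ 2 * (2 * A) := by gcongr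
      have h2 : 0 ≤ r * (1 / 2 + r ^ 2 * A) := mul_nonneg hr.le (by linarith)
      linarith
    have hsq : |l ^ 2 - (r + A * r ^ 3) ^ 2| ≤ (K * M + A ^ 2) * r ^ 6 := by
      have h1 : l ^ 2 - (r + A * r ^ 3) ^ 2 = r ^ 4 * (q - 2 * A) - A ^ 2 * r ^ 6 := by
        rw [hl]; ring
      rw [h1]
      calc _ ≤ |r ^ 4 * (q - 2 * A)| + |A ^ 2 * r ^ 6| := abs_sub _ _
        _ = r ^ 4 * |q - 2 * A| + A ^ 2 * r ^ 6 := by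
          rw [abs_mul, abs_of_pos (by positivity : 0 < r ^ 4),
            abs_of_nonneg (by positivity : 0 ≤ A ^ 2 * r ^ 6)]
        _ ≤ r ^ 4 * (K * M * r ^ 2) + A ^ 2 * r ^ 6 := by gcongr
        _ = _ := by ring
    have := abs_sub_le_of_sq hr hst hsq
    rw [← sub_sub] at this
    refine this.trans ?_
    gcongr
    have : 0 < L * M := by positivity
    linarith

end
end

section
/- Fix constants κ, δ, γ̃ > 0 with 2κ < δ. There exist ε₀, C, c > 0 such that for every r with 0 < r ≤ ε₀ and every t ≥ 0 the kernels K̂₀, K̂₁, K̂₂ built from the three (pairwise distinct) roots λ₁(r), λ₂(r) = λ_R(r) + iλ_I(r), λ₃(r) = λ_R(r) − iλ_I(r) of the cubic C_r satisfy: |K̂₀(t,r)| ≤ C e^{-c r² t}; |K̂₁(t,r)| ≤ C (1 + |sin(rt)|/r) e^{-c r² t}; and |K̂₂(t,r)| ≤ C ( t |cos(rt)| + |sin(rt)|/r + sin²(rt/2)/r² ) e^{-c r² t}. -/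
/-!
Writing the three roots as `l₁` and `l_R ± i l_I`, Vieta's relations give, as `r → 0`,
`l₁ = O(r²)`, `l_R = O(r²)`, both at most `-κ r² / 2`, and `l_I = r + O(r³)`
(`blackstock_roots_localised`). The condition `2κ < δ` makes the crude bound `-l₁ ≤ 2κ r²`
sufficient for the upper bound on `l_R = -((δ + κ) r² + l₁) / 2`.

The kernels are real, with explicit trigonometric forms over the common denominator
`D = (l_R - l₁)² + l_I² ≥ r² / 4`. With `E = exp (-κ r² t / 6)` both real exponentials are at most
`E³`; one factor `E` is the decay in the conclusion, the other two absorb powers of `r² t`.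
Replacing `l_I` by `r` inside a sine costs `O(r³ t)`, hence only `O(r)` after absorption. For `K̂₂`,
the cancellation in `e^{l₁ t} - e^{l_R t} cos (l_I t)` is exploited by comparing both terms with
`e^{l_R t}`. This leaves a term `t E` times the decay, which the right-hand side controls because
`1 = cos (r t) + 2 sin² (r t / 2)` and `t E = O(1 / r²)`.
-/

/-!
STATEMENT 9. Pointwise estimates for the kernels `K̂₀, K̂₁, K̂₂` of the
small-frequency solution representation of the linear Blackstock model, built
from the three pairwise distinct roots `λ₁(r)` (real) and
`λ_R(r) ± iλ_I(r)` (non-real, `λ_I(r) > 0`) of the characteristic cubic.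
The roots are characterised by the root equations (they are unique once `λ_I > 0`).
-/

noncomputable section

/-- `K̂₀(t) = Σⱼ e^{λⱼt} (Πₖ≠ⱼ λₖ)/(Πₖ≠ⱼ (λⱼ−λₖ))`. -/
def Khat0 (l1 l2 l3 : ℂ) (t : ℝ) : ℂ :=
  Complex.exp (l1 * t) * (l2 * l3) / ((l1 - l2) * (l1 - l3))
    + Complex.exp (l2 * t) * (l1 * l3) / ((l2 - l1) * (l2 - l3))
    + Complex.exp (l3 * t) * (l1 * l2) / ((l3 - l1) * (l3 - l2))

/-- `K̂₁(t) = −Σⱼ e^{λⱼt} (Σₖ≠ⱼ λₖ)/(Πₖ≠ⱼ (λⱼ−λₖ))`. -/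
def Khat1 (l1 l2 l3 : ℂ) (t : ℝ) : ℂ :=
  -(Complex.exp (l1 * t) * (l2 + l3) / ((l1 - l2) * (l1 - l3))
    + Complex.exp (l2 * t) * (l1 + l3) / ((l2 - l1) * (l2 - l3))
    + Complex.exp (l3 * t) * (l1 + l2) / ((l3 - l1) * (l3 - l2)))

/-- `K̂₂(t) = Σⱼ e^{λⱼt} / (Πₖ≠ⱼ (λⱼ−λₖ))`. -/
def Khat2 (l1 l2 l3 : ℂ) (t : ℝ) : ℂ :=
  Complex.exp (l1 * t) / ((l1 - l2) * (l1 - l3))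
    + Complex.exp (l2 * t) / ((l2 - l1) * (l2 - l3))
    + Complex.exp (l3 * t) / ((l3 - l1) * (l3 - l2))

/-! ### Localisation of the roots -/

/-- The size information on the roots used by the kernel estimates: `K` bounds the implied constants
in `l₁, l_R = O(r²)` and `l_I = r + O(r³)`. -/
structure RootBounds (κ K r l1 lR lI : ℝ) : Prop where
  one_le : 1 ≤ K
  r_pos : 0 < r
  r_le : r ≤ 1
  abs_l1 : |l1| ≤ K * r ^ 2
  abs_lR : |lR| ≤ K * r ^ 2
  l1_le : l1 ≤ -(κ / 2) * r ^ 2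
  lR_le : lR ≤ -(κ / 2) * r ^ 2
  lI_sub : |lI - r| ≤ K * r ^ 3
  lI_ge : r / 2 ≤ lI
  lI_le : lI ≤ 2 * r

/-- Vieta's relations for `l1`, `lR ± i lI`: they hold for any real root and any non-real root, since
the non-real root and its conjugate split off a quadratic factor without real zeros. -/
lemma blackstock_vieta {κ δ γt r l1 lR lI : ℝ} (hI : 0 < lI)
    (h1 : blackstockCubic κ δ γt r (l1 : ℂ) = 0)
    (h2 : blackstockCubic κ δ γt r ((lR : ℂ) + (lI : ℂ) * Complex.I) = 0) :
    l1 + 2 * lR = -((δ + κ) * r ^ 2) ∧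
    2 * l1 * lR + (lR ^ 2 + lI ^ 2) = (1 + γt * r ^ 2) * r ^ 2 ∧
    l1 * (lR ^ 2 + lI ^ 2) = -(κ * r ^ 4) := by
  have e1 : l1 ^ 3 + (δ + κ) * r ^ 2 * l1 ^ 2 + (1 + γt * r ^ 2) * r ^ 2 * l1 + κ * r ^ 4 = 0 := by
    unfold blackstockCubic at h1
    exact_mod_cast h1
  have hsplit : blackstockCubic κ δ γt r ((lR : ℂ) + (lI : ℂ) * Complex.I) =
      ((lR ^ 3 - 3 * lR * lI ^ 2 + (δ + κ) * r ^ 2 * (lR ^ 2 - lI ^ 2)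
        + (1 + γt * r ^ 2) * r ^ 2 * lR + κ * r ^ 4 : ℝ) : ℂ)
      + ((lI * (3 * lR ^ 2 - lI ^ 2 + 2 * ((δ + κ) * r ^ 2) * lR
        + (1 + γt * r ^ 2) * r ^ 2) : ℝ) : ℂ) * Complex.I := by
    unfold blackstockCubic
    push_cast
    linear_combination ((lI : ℂ) ^ 3 * Complex.I + 3 * lR * (lI : ℂ) ^ 2
      + (δ + κ) * r ^ 2 * (lI : ℂ) ^ 2) * Complex.I_sq
  rw [hsplit] at h2
  have hre := congrArg Complex.re h2
  have him := congrArg Complex.im h2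
  simp only [Complex.add_re, Complex.add_im, Complex.re_ofReal_mul, Complex.im_ofReal_mul,
    Complex.ofReal_re, Complex.ofReal_im, Complex.I_re, Complex.I_im, Complex.zero_re,
    Complex.zero_im, mul_zero, mul_one, add_zero, zero_add] at hre him
  have e3 : 3 * lR ^ 2 - lI ^ 2 + 2 * ((δ + κ) * r ^ 2) * lR + (1 + γt * r ^ 2) * r ^ 2 = 0 :=
    (mul_eq_zero.mp him).resolve_left hI.ne'
  -- The cubic is `(z - s) ((z - lR)² + lI²)` with `s = -(δ + κ) r² - 2 lR`; evaluate at `l1`.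
  have hfac : (l1 + 2 * lR + (δ + κ) * r ^ 2) * ((l1 - lR) ^ 2 + lI ^ 2) = 0 := by
    linear_combination e1 - hre + (lR - l1) * e3
  have hpos : (l1 - lR) ^ 2 + lI ^ 2 ≠ 0 := by positivity
  have s1 := (mul_eq_zero.mp hfac).resolve_right hpos
  refine ⟨by linarith, by linear_combination 2 * lR * s1 - e3, ?_⟩
  linear_combination (lR ^ 2 + lI ^ 2) * s1 + hre - lR * e3

/-- Localisation of the roots. The order matters: `N = lR² + lI²` is bounded below first, by completing
the square in `l1`; then `l1 N = -κ r⁴` gives `-2κ r² ≤ l1 < 0`, and the remaining bounds follow. -/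
lemma blackstock_roots_localised {κ δ γt : ℝ} (hκ : 0 < κ) (hγt : 0 < γt) (hκδ : 2 * κ < δ) :
    ∃ ε₀ K : ℝ, 0 < ε₀ ∧ 0 < K ∧ ∀ r : ℝ, 0 < r → r ≤ ε₀ → ∀ l1 lR lI : ℝ, 0 < lI →
      blackstockCubic κ δ γt r (l1 : ℂ) = 0 →
      blackstockCubic κ δ γt r ((lR : ℂ) + (lI : ℂ) * Complex.I) = 0 →
      RootBounds κ K r l1 lR lI := by
  set a := δ + κ with ha
  have hapos : 0 < a := by linarith
  -- `K` dominates the `r⁴` coefficients of `lI² - r²`; `K ε₀ = 1/2` makes all corrections small.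
  set K := 1 + a + a ^ 2 + γt + 2 * κ * a + 4 * κ ^ 2 + 2 * κ with hK
  have hκa : 0 < κ * a := by positivity
  have hκ2 : 0 < κ ^ 2 := by positivity
  have ha2 : 0 < a ^ 2 := by positivity
  have hK1 : 1 ≤ K := by linarith
  have hKa : a ≤ K := by linarith
  have hKa2 : a ^ 2 ≤ K := by linarith
  have hKκ : 2 * κ ≤ K := by linarith
  have hKs : γt + 4 * κ ^ 2 ≤ K := by linarith
  have hKm : γt + 2 * κ * a + a ^ 2 ≤ K := by linarith
  have hKpos : 0 < K := by linarith
  refine ⟨1 / (2 * K), K, by positivity, hKpos, ?_⟩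
  intro r hr hrε l1 lR lI hI h1 h2
  obtain ⟨v1, v2, v3⟩ := blackstock_vieta hI h1 h2
  have hKr : K * r ≤ 1 / 2 := by
    have := mul_le_mul_of_nonneg_left hrε hKpos.le
    rwa [show K * (1 / (2 * K)) = 1 / 2 by field_simp] at this
  have hr1 : r ≤ 1 / 2 := by linarith [mul_le_mul_of_nonneg_right hK1 hr.le]
  have hr2 : 0 < r ^ 2 := by positivity
  have hr4 : 0 < r ^ 4 := by positivity
  have hKr2 : K * r ^ 2 ≤ 1 / 2 := by
    linarith [mul_le_mul hKr hr1 hr.le (by norm_num)]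
  have hKr4 : K * r ^ 4 ≤ r ^ 2 / 2 := by linarith [mul_le_mul_of_nonneg_right hKr2 hr2.le]
  have hN : 0 < lR ^ 2 + lI ^ 2 := by positivity
  have hl1 : l1 < 0 := by
    by_contra hcon
    have : 0 ≤ l1 * (lR ^ 2 + lI ^ 2) := mul_nonneg (not_lt.mp hcon) hN.le
    have : 0 < κ * r ^ 4 := by positivity
    linarith
  have hlR : lR = (-(a * r ^ 2) - l1) / 2 := by linarith
  have hNeq : lR ^ 2 + lI ^ 2 = l1 ^ 2 + a * r ^ 2 * l1 + (1 + γt * r ^ 2) * r ^ 2 := by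
    rw [hlR] at v2 ⊢; linarith
  have hNlow : r ^ 2 / 2 ≤ lR ^ 2 + lI ^ 2 := by
    have hs : 0 ≤ l1 ^ 2 + a * r ^ 2 * l1 + a ^ 2 * r ^ 4 / 4 :=
      (sq_nonneg (l1 + a * r ^ 2 / 2)).trans_eq (by ring)
    have h5 : a ^ 2 * r ^ 4 ≤ K * r ^ 4 := mul_le_mul_of_nonneg_right hKa2 hr4.le
    have : 0 < γt * r ^ 4 := by positivity
    linarith
  have hy : -l1 ≤ 2 * κ * r ^ 2 := by
    have h5 : -l1 * (r ^ 2 / 2) ≤ -l1 * (lR ^ 2 + lI ^ 2) :=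
      mul_le_mul_of_nonneg_left hNlow (by linarith)
    have h6 : -l1 * r ^ 2 ≤ (2 * κ * r ^ 2) * r ^ 2 := by linarith
    exact le_of_mul_le_mul_right h6 hr2
  have hlR_le : lR ≤ -(κ / 2) * r ^ 2 := by
    have : 0 < (δ - 2 * κ) * r ^ 2 := mul_pos (by linarith) hr2
    rw [hlR, ha]; linarith
  have hl1sq : l1 ^ 2 ≤ 4 * κ ^ 2 * r ^ 4 := by
    linarith [mul_self_le_mul_self (by linarith : (0 : ℝ) ≤ -l1) hy]
  have hNup : lR ^ 2 + lI ^ 2 ≤ 2 * r ^ 2 := by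
    have h5 : (γt + 4 * κ ^ 2) * r ^ 4 ≤ K * r ^ 4 := mul_le_mul_of_nonneg_right hKs hr4.le
    have h6 : a * r ^ 2 * l1 ≤ 0 := mul_nonpos_of_nonneg_of_nonpos (by positivity) hl1.le
    linarith
  have hl1_le : l1 ≤ -(κ / 2) * r ^ 2 := by
    have h5 : -l1 * (lR ^ 2 + lI ^ 2) ≤ -l1 * (2 * r ^ 2) :=
      mul_le_mul_of_nonneg_left hNup (by linarith)
    have h6 : (κ / 2 * r ^ 2) * r ^ 2 ≤ -l1 * r ^ 2 := by linarith
    have := le_of_mul_le_mul_right h6 hr2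
    linarith
  have hlRneg : lR < 0 := by
    have : 0 < κ * r ^ 2 := by positivity
    linarith
  have hlRlow : -lR ≤ a * r ^ 2 := by
    have : 0 < a * r ^ 2 := by positivity
    linarith
  have hsq : |lI ^ 2 - r ^ 2| ≤ K * r ^ 4 := by
    have hm : (γt + 2 * κ * a + a ^ 2) * r ^ 4 ≤ K * r ^ 4 := mul_le_mul_of_nonneg_right hKm hr4.le
    have hlRsq : lR ^ 2 ≤ a ^ 2 * r ^ 4 := by
      linarith [mul_self_le_mul_self (by linarith : (0 : ℝ) ≤ -lR) hlRlow]
    -- From `lI² - r² = γt r⁴ - 2 l1 lR - lR²` with `lR = -(a r² + l1) / 2`.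
    have hprod : a * r ^ 2 * (-l1) ≤ a * r ^ 2 * (2 * κ * r ^ 2) :=
      mul_le_mul_of_nonneg_left hy (by positivity)
    have hg : 0 < γt * r ^ 4 := by positivity
    have hll : 0 < l1 * lR := mul_pos_of_neg_of_neg hl1 hlRneg
    have hka : 0 < κ * a * r ^ 4 := by positivity
    have haa : 0 < a ^ 2 * r ^ 4 := by positivity
    have heq : lI ^ 2 - r ^ 2 = γt * r ^ 4 - 2 * (l1 * lR) - lR ^ 2 := by linarith
    have hll2 : 2 * (l1 * lR) = a * r ^ 2 * (-l1) - l1 ^ 2 := by rw [hlR]; ring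
    have hs := sq_nonneg l1
    have hs' := sq_nonneg lR
    rw [abs_le]
    constructor <;> linarith
  have hsub : |lI - r| ≤ K * r ^ 3 := by
    have h5 : |lI - r| * r ≤ (K * r ^ 3) * r := by
      calc |lI - r| * r ≤ |lI - r| * (lI + r) :=
            mul_le_mul_of_nonneg_left (by linarith) (abs_nonneg _)
        _ = |lI ^ 2 - r ^ 2| := by
            rw [show lI ^ 2 - r ^ 2 = (lI - r) * (lI + r) by ring, abs_mul,
              abs_of_pos (by linarith : 0 < lI + r)]
        _ ≤ (K * r ^ 3) * r := by linarith [hsq, (by ring : K * r ^ 4 = (K * r ^ 3) * r)]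
    exact le_of_mul_le_mul_right h5 hr
  have hKr3 : K * r ^ 3 ≤ r / 2 := by linarith [mul_le_mul_of_nonneg_right hKr2 hr.le]
  have hab := abs_le.mp hsub
  refine ⟨hK1, hr, by linarith, ?_, ?_, hl1_le, hlR_le, hsub, by linarith, by linarith⟩
  · rw [abs_of_neg hl1]
    exact hy.trans (mul_le_mul_of_nonneg_right hKκ hr2.le)
  · rw [abs_of_neg hlRneg]
    exact hlRlow.trans (mul_le_mul_of_nonneg_right hKa hr2.le)

/-! ### Closed forms of the kernels -/

/-- The real denominator `|λ₁ - λ₂|²` shared by all three kernels. -/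
def kernelDenom (l1 lR lI : ℝ) : ℝ := (lR - l1) ^ 2 + lI ^ 2

section ClosedForms

variable (l1 lR lI t : ℝ)

lemma exp_root_add : Complex.exp (((lR : ℂ) + (lI : ℂ) * Complex.I) * t) =
    (Real.exp (lR * t) : ℂ) * ((Real.cos (lI * t) : ℂ) + (Real.sin (lI * t) : ℂ) * Complex.I) := by
  rw [show ((lR : ℂ) + (lI : ℂ) * Complex.I) * t
    = ((lR * t : ℝ) : ℂ) + ((lI * t : ℝ) : ℂ) * Complex.I by push_cast; ring,
    Complex.exp_add, Complex.exp_mul_I]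
  push_cast
  rfl

lemma exp_root_sub : Complex.exp (((lR : ℂ) - (lI : ℂ) * Complex.I) * t) =
    (Real.exp (lR * t) : ℂ) * ((Real.cos (lI * t) : ℂ) - (Real.sin (lI * t) : ℂ) * Complex.I) := by
  have h := exp_root_add lR (-lI) t
  simp only [neg_mul, Real.cos_neg, Real.sin_neg, Complex.ofReal_neg, ← sub_eq_add_neg] at h
  exact h

/-- A sum over the three roots with real weight at the first root and conjugate weights `p ± iq` at
the other two. The three kernels are instances. -/
lemma root_sum_eq (hI : 0 < lI) (w p q : ℝ) :
    Complex.exp ((l1 : ℂ) * t) * (w : ℂ) /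
        (((l1 : ℂ) - ((lR : ℂ) + (lI : ℂ) * Complex.I)) *
          ((l1 : ℂ) - ((lR : ℂ) - (lI : ℂ) * Complex.I)))
      + Complex.exp (((lR : ℂ) + (lI : ℂ) * Complex.I) * t) * ((p : ℂ) + (q : ℂ) * Complex.I) /
        ((((lR : ℂ) + (lI : ℂ) * Complex.I) - l1) *
          (((lR : ℂ) + (lI : ℂ) * Complex.I) - ((lR : ℂ) - (lI : ℂ) * Complex.I)))
      + Complex.exp (((lR : ℂ) - (lI : ℂ) * Complex.I) * t) * ((p : ℂ) - (q : ℂ) * Complex.I) /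
        ((((lR : ℂ) - (lI : ℂ) * Complex.I) - l1) *
          (((lR : ℂ) - (lI : ℂ) * Complex.I) - ((lR : ℂ) + (lI : ℂ) * Complex.I)))
      = (((Real.exp (l1 * t) * w + Real.exp (lR * t) *
          ((p * (lR - l1) + q * lI) * (Real.sin (lI * t) / lI)
            + (q * (lR - l1) - p * lI) / lI * Real.cos (lI * t)))
          / kernelDenom l1 lR lI : ℝ) : ℂ) := by
  rw [exp_root_add, exp_root_sub,
    show Complex.exp ((l1 : ℂ) * t) = (Real.exp (l1 * t) : ℂ) by push_cast; rfl]
  generalize Real.exp (l1 * t) = e1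
  generalize Real.exp (lR * t) = e2
  generalize Real.sin (lI * t) = s
  generalize Real.cos (lI * t) = c
  have hIc : (lI : ℂ) ≠ 0 := by exact_mod_cast hI.ne'
  have hD : ((lR : ℂ) - l1) ^ 2 + (lI : ℂ) ^ 2 ≠ 0 := by
    have : (lR - l1) ^ 2 + lI ^ 2 ≠ 0 := by positivity
    exact_mod_cast this
  have hf : (((lR : ℂ) - l1) + lI * Complex.I) * (((lR : ℂ) - l1) - lI * Complex.I)
      = ((lR : ℂ) - l1) ^ 2 + (lI : ℂ) ^ 2 := by
    linear_combination -(lI : ℂ) ^ 2 * Complex.I_sq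
  have hz : ((lR : ℂ) - l1) + lI * Complex.I ≠ 0 := fun h => hD (by rw [← hf, h, zero_mul])
  have hz' : ((lR : ℂ) - l1) - lI * Complex.I ≠ 0 := fun h => hD (by rw [← hf, h, mul_zero])
  unfold kernelDenom
  push_cast
  rw [← hf]
  rw [show ((l1 : ℂ) - ((lR : ℂ) + (lI : ℂ) * Complex.I)) *
          ((l1 : ℂ) - ((lR : ℂ) - (lI : ℂ) * Complex.I)) =
        (((lR : ℂ) - l1) + lI * Complex.I) * (((lR : ℂ) - l1) - lI * Complex.I) by ring,
    show (((lR : ℂ) + (lI : ℂ) * Complex.I) - l1) *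
          (((lR : ℂ) + (lI : ℂ) * Complex.I) - ((lR : ℂ) - (lI : ℂ) * Complex.I)) =
        (((lR : ℂ) - l1) + lI * Complex.I) * (2 * lI * Complex.I) by ring,
    show (((lR : ℂ) - (lI : ℂ) * Complex.I) - l1) *
          (((lR : ℂ) - (lI : ℂ) * Complex.I) - ((lR : ℂ) + (lI : ℂ) * Complex.I)) =
        (((lR : ℂ) - l1) - lI * Complex.I) * (-(2 * lI * Complex.I)) by ring]
  have hII : Complex.I ≠ 0 := Complex.I_ne_zero
  field_simp
  ring_nf
  simp only [Complex.I_pow_three]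
  ring_nf

lemma Khat0_eq (hI : 0 < lI) :
    Khat0 (l1 : ℂ) ((lR : ℂ) + (lI : ℂ) * Complex.I) ((lR : ℂ) - (lI : ℂ) * Complex.I) t =
      (((Real.exp (l1 * t) * (lR ^ 2 + lI ^ 2) + Real.exp (lR * t) *
          ((l1 * lR * (lR - l1) + -(l1 * lI) * lI) * (Real.sin (lI * t) / lI)
            + (-(l1 * lI) * (lR - l1) - l1 * lR * lI) / lI * Real.cos (lI * t)))
          / kernelDenom l1 lR lI : ℝ) : ℂ) := by
  rw [← root_sum_eq l1 lR lI t hI]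
  unfold Khat0
  congr 3 <;> congr 1 <;> push_cast
  · linear_combination -(lI : ℂ) ^ 2 * Complex.I_sq
  · ring
  · ring

lemma Khat1_eq (hI : 0 < lI) :
    Khat1 (l1 : ℂ) ((lR : ℂ) + (lI : ℂ) * Complex.I) ((lR : ℂ) - (lI : ℂ) * Complex.I) t =
      ((-((Real.exp (l1 * t) * (2 * lR) + Real.exp (lR * t) *
          (((l1 + lR) * (lR - l1) + -lI * lI) * (Real.sin (lI * t) / lI)
            + (-lI * (lR - l1) - (l1 + lR) * lI) / lI * Real.cos (lI * t)))
          / kernelDenom l1 lR lI) : ℝ) : ℂ) := by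
  rw [Complex.ofReal_neg, ← root_sum_eq l1 lR lI t hI]
  unfold Khat1
  congr 4 <;> congr 1 <;> push_cast <;> ring

lemma Khat2_eq (hI : 0 < lI) :
    Khat2 (l1 : ℂ) ((lR : ℂ) + (lI : ℂ) * Complex.I) ((lR : ℂ) - (lI : ℂ) * Complex.I) t =
      (((Real.exp (l1 * t) * 1 + Real.exp (lR * t) *
          ((1 * (lR - l1) + 0 * lI) * (Real.sin (lI * t) / lI)
            + (0 * (lR - l1) - 1 * lI) / lI * Real.cos (lI * t)))
          / kernelDenom l1 lR lI : ℝ) : ℂ) := by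
  rw [← root_sum_eq l1 lR lI t hI]
  unfold Khat2
  simp

end ClosedForms

/-! ### Decay and elementary inequalities -/

lemma abs_exp_sub_exp_le {a b m : ℝ} (ha : a ≤ m) (hb : b ≤ m) :
    |Real.exp a - Real.exp b| ≤ |a - b| * Real.exp m := by
  have key : ∀ x y : ℝ, x ≤ m → Real.exp x - Real.exp y ≤ |x - y| * Real.exp m := by
    intro x y hx
    have h1 : Real.exp y = Real.exp x * Real.exp (y - x) := by rw [← Real.exp_add]; ring_nf
    have h2 := Real.add_one_le_exp (y - x)
    calc Real.exp x - Real.exp y = Real.exp x * (1 - Real.exp (y - x)) := by rw [h1]; ring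
      _ ≤ Real.exp x * |x - y| :=
        mul_le_mul_of_nonneg_left (by linarith [le_abs_self (x - y)]) (Real.exp_pos x).le
      _ ≤ Real.exp m * |x - y| :=
        mul_le_mul_of_nonneg_right (Real.exp_le_exp.mpr hx) (abs_nonneg _)
      _ = |x - y| * Real.exp m := mul_comm _ _
  rw [abs_le]
  constructor
  · have := key b a hb
    rw [abs_sub_comm] at this
    linarith
  · exact key a b ha

lemma abs_sin_sub_sin_le (x y : ℝ) : |Real.sin x - Real.sin y| ≤ |x - y| := by
  rw [Real.sin_sub_sin, abs_mul, abs_mul, abs_two]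
  calc 2 * |Real.sin ((x - y) / 2)| * |Real.cos ((x + y) / 2)|
      ≤ 2 * |(x - y) / 2| * 1 :=
        mul_le_mul (mul_le_mul_of_nonneg_left Real.abs_sin_le_abs zero_le_two)
          (Real.abs_cos_le_one _) (abs_nonneg _) (by positivity)
    _ = |x - y| := by rw [abs_div, abs_two]; ring

/-- One factor of the exponential decay; both real exponentials are bounded by its cube. -/
def decay (κ r t : ℝ) : ℝ := Real.exp (-(κ / 6) * r ^ 2 * t)

lemma decay_pos (κ r t : ℝ) : 0 < decay κ r t := Real.exp_pos _

lemma decay_le_one {κ r t : ℝ} (hκ : 0 < κ) (ht : 0 ≤ t) : decay κ r t ≤ 1 := by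
  refine Real.exp_le_one_iff.mpr ?_
  have : 0 ≤ κ / 6 * r ^ 2 * t := by positivity
  linarith

/-- A factor of the decay absorbs one power of `r² t`. -/
lemma mul_decay_le {κ r t : ℝ} (hκ : 0 < κ) : r ^ 2 * (t * decay κ r t) ≤ 6 / κ := by
  have h := Real.add_one_le_exp (κ / 6 * r ^ 2 * t)
  have hE : decay κ r t = (Real.exp (κ / 6 * r ^ 2 * t))⁻¹ := by
    rw [decay, ← Real.exp_neg]; ring_nf
  have hp := Real.exp_pos (κ / 6 * r ^ 2 * t)
  have h2 : (κ / 6 * r ^ 2 * t) * decay κ r t ≤ 1 := by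
    rw [hE, ← div_eq_mul_inv, div_le_one hp]
    linarith
  rw [le_div_iff₀ hκ]
  linarith

lemma decay_cube (κ r t : ℝ) : Real.exp (-(κ / 2) * r ^ 2 * t) = decay κ r t ^ 3 := by
  rw [decay, ← Real.exp_nat_mul]
  congr 1
  push_cast
  ring

/-! ### Kernel estimates under the root bounds -/

namespace RootBounds

variable {κ K r l1 lR lI t : ℝ}

lemma exp_l1_le (h : RootBounds κ K r l1 lR lI) (ht : 0 ≤ t) :
    Real.exp (l1 * t) ≤ decay κ r t ^ 3 := by
  rw [← decay_cube]
  exact Real.exp_le_exp.mpr (mul_le_mul_of_nonneg_right h.l1_le ht)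

lemma exp_lR_le (h : RootBounds κ K r l1 lR lI) (ht : 0 ≤ t) :
    Real.exp (lR * t) ≤ decay κ r t ^ 3 := by
  rw [← decay_cube]
  exact Real.exp_le_exp.mpr (mul_le_mul_of_nonneg_right h.lR_le ht)

lemma lI_pos (h : RootBounds κ K r l1 lR lI) : 0 < lI := by linarith [h.lI_ge, h.r_pos]

lemma abs_lI_le (h : RootBounds κ K r l1 lR lI) : |lI| ≤ 2 * r := by
  rw [abs_of_pos h.lI_pos]; exact h.lI_le

lemma abs_sin_lI_le (h : RootBounds κ K r l1 lR lI) (ht : 0 ≤ t) :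
    |Real.sin (lI * t)| ≤ |Real.sin (r * t)| + K * r ^ 3 * t := by
  have h1 := abs_sin_sub_sin_le (lI * t) (r * t)
  rw [← sub_mul, abs_mul, abs_of_nonneg ht] at h1
  have h2 := mul_le_mul_of_nonneg_right h.lI_sub ht
  have h3 := abs_sub_abs_le_abs_sub (Real.sin (lI * t)) (Real.sin (r * t))
  linarith

lemma one_sub_cos_le (h : RootBounds κ K r l1 lR lI) (ht : 0 ≤ t) :
    |1 - Real.cos (lI * t)| ≤ 4 * Real.sin (r * t / 2) ^ 2 + (K * r ^ 3 * t) ^ 2 := by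
  have h0 : 1 - Real.cos (lI * t) = 2 * Real.sin (lI * t / 2) ^ 2 := by
    have := Real.cos_sq (lI * t / 2)
    rw [show 2 * (lI * t / 2) = lI * t by ring] at this
    linarith [Real.sin_sq_add_cos_sq (lI * t / 2)]
  have h1 := abs_sin_sub_sin_le (lI * t / 2) (r * t / 2)
  rw [show lI * t / 2 - r * t / 2 = (lI - r) * (t / 2) by ring, abs_mul,
    abs_of_nonneg (by linarith : 0 ≤ t / 2)] at h1
  have h2 := mul_le_mul_of_nonneg_right h.lI_sub (by linarith : 0 ≤ t / 2)
  have h3 : (Real.sin (lI * t / 2) - Real.sin (r * t / 2)) ^ 2 ≤ (K * r ^ 3 * (t / 2)) ^ 2 :=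
    sq_le_sq' (by linarith [neg_abs_le (Real.sin (lI * t / 2) - Real.sin (r * t / 2))])
      (by linarith [le_abs_self (Real.sin (lI * t / 2) - Real.sin (r * t / 2))])
  rw [h0, abs_of_nonneg (by positivity)]
  linarith [sq_nonneg (Real.sin (lI * t / 2) - 2 * Real.sin (r * t / 2))]

/-- Division by the common denominator gains a factor `r⁻²`. -/
lemma abs_div_kernelDenom_le (h : RootBounds κ K r l1 lR lI) {X M : ℝ} (hX : |X| ≤ r ^ 2 * M) :
    |X / kernelDenom l1 lR lI| ≤ 4 * M := by
  have hr := h.r_pos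
  have hD : r ^ 2 / 4 ≤ kernelDenom l1 lR lI := by
    unfold kernelDenom
    nlinarith [sq_nonneg (lR - l1), h.lI_ge]
  have hDpos : 0 < kernelDenom l1 lR lI := lt_of_lt_of_le (by positivity) hD
  have hM : 0 ≤ M := by
    by_contra hneg
    have : r ^ 2 * M < 0 := mul_neg_of_pos_of_neg (by positivity) (not_le.mp hneg)
    linarith [abs_nonneg X]
  rw [abs_div, abs_of_pos hDpos, div_le_iff₀ hDpos]
  calc |X| ≤ r ^ 2 * M := hX
    _ = 4 * M * (r ^ 2 / 4) := by ring
    _ ≤ 4 * M * kernelDenom l1 lR lI := mul_le_mul_of_nonneg_left hD (by positivity)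

lemma abs_div_lI_le (h : RootBounds κ K r l1 lR lI) (s : ℝ) : |s / lI| ≤ 2 / r * |s| := by
  have hr := h.r_pos
  rw [abs_div, abs_of_pos h.lI_pos, div_le_iff₀ h.lI_pos]
  calc |s| = 2 / r * |s| * (r / 2) := by field_simp
    _ ≤ 2 / r * |s| * lI := mul_le_mul_of_nonneg_left h.lI_ge (by positivity)

/-- Bound for the common shape of the numerators in the closed forms of the kernels. -/
lemma abs_numerator_le (h : RootBounds κ K r l1 lR lI) (ht : 0 ≤ t) {w a b W A B : ℝ}
    (hw : |w| ≤ W) (ha : |a| ≤ A) (hb : |b| ≤ B) :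
    |Real.exp (l1 * t) * w + Real.exp (lR * t) *
      (a * (Real.sin (lI * t) / lI) + b * Real.cos (lI * t))|
      ≤ decay κ r t ^ 3 * (W + A * (2 / r * |Real.sin (lI * t)|) + B) := by
  have hE := decay_pos κ r t
  have hA : 0 ≤ A := (abs_nonneg _).trans ha
  have hB : 0 ≤ B := (abs_nonneg _).trans hb
  have hr := h.r_pos
  have h1 : |Real.exp (l1 * t) * w| ≤ decay κ r t ^ 3 * W := by
    rw [abs_mul, abs_of_pos (Real.exp_pos _)]
    exact mul_le_mul (h.exp_l1_le ht) hw (abs_nonneg _) (by positivity)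
  have h2 : |a * (Real.sin (lI * t) / lI) + b * Real.cos (lI * t)|
      ≤ A * (2 / r * |Real.sin (lI * t)|) + B := by
    refine (abs_add_le _ _).trans (add_le_add ?_ ?_)
    · rw [abs_mul]
      exact mul_le_mul ha (h.abs_div_lI_le _) (abs_nonneg _) hA
    · rw [abs_mul]
      calc |b| * |Real.cos (lI * t)| ≤ B * 1 :=
            mul_le_mul hb (Real.abs_cos_le_one _) (abs_nonneg _) hB
        _ = B := mul_one B
  have h3 : |Real.exp (lR * t) * (a * (Real.sin (lI * t) / lI) + b * Real.cos (lI * t))|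
      ≤ decay κ r t ^ 3 * (A * (2 / r * |Real.sin (lI * t)|) + B) := by
    rw [abs_mul, abs_of_pos (Real.exp_pos _)]
    exact mul_le_mul (h.exp_lR_le ht) h2 (abs_nonneg _) (by positivity)
  calc _ ≤ _ := abs_add_le _ _
    _ ≤ _ := add_le_add h1 h3
    _ = _ := by ring

lemma norm_Khat0_le (hκ : 0 < κ) (h : RootBounds κ K r l1 lR lI) (ht : 0 ≤ t) :
    ‖Khat0 (l1 : ℂ) ((lR : ℂ) + (lI : ℂ) * Complex.I) ((lR : ℂ) - (lI : ℂ) * Complex.I) t‖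
      ≤ 4 * (4 * K ^ 3 + 4 * K ^ 2 + 8 * K + 4) * decay κ r t := by
  have hr := h.r_pos
  have hr1 := h.r_le
  have hK := h.one_le
  have hE := decay_pos κ r t
  have hE1 := decay_le_one (r := r) hκ ht
  have hr2 : r ^ 4 ≤ r ^ 2 := pow_le_pow_of_le_one hr.le hr1 (by norm_num)
  have hr3 : r ^ 4 ≤ r ^ 3 := pow_le_pow_of_le_one hr.le hr1 (by norm_num)
  have hr6 : r ^ 6 ≤ r ^ 3 := pow_le_pow_of_le_one hr.le hr1 (by norm_num)
  have hw : |lR ^ 2 + lI ^ 2| ≤ (K ^ 2 + 4) * r ^ 2 := by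
    calc |lR ^ 2 + lI ^ 2| = |lR| ^ 2 + |lI| ^ 2 := by
          rw [sq_abs, sq_abs, abs_of_nonneg (by positivity)]
      _ ≤ (K * r ^ 2) ^ 2 + (2 * r) ^ 2 := by
          gcongr
          · exact h.abs_lR
          · exact h.abs_lI_le
      _ = K ^ 2 * r ^ 4 + 4 * r ^ 2 := by ring
      _ ≤ K ^ 2 * r ^ 2 + 4 * r ^ 2 := by gcongr
      _ = _ := by ring
  have ha : |l1 * lR * (lR - l1) + -(l1 * lI) * lI| ≤ (2 * K ^ 3 + 4 * K) * r ^ 3 := by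
    calc |l1 * lR * (lR - l1) + -(l1 * lI) * lI|
        ≤ |l1| * |lR| * (|lR| + |l1|) + |l1| * |lI| * |lI| := by
          refine (abs_add_le _ _).trans ?_
          simp only [abs_mul, abs_neg]
          gcongr
          exact abs_sub _ _
      _ ≤ K * r ^ 2 * (K * r ^ 2) * (K * r ^ 2 + K * r ^ 2)
            + K * r ^ 2 * (2 * r) * (2 * r) := by
          gcongr <;> first | exact h.abs_l1 | exact h.abs_lR | exact h.abs_lI_le
      _ = 2 * K ^ 3 * r ^ 6 + 4 * K * r ^ 4 := by ring
      _ ≤ 2 * K ^ 3 * r ^ 3 + 4 * K * r ^ 3 := by gcongr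
      _ = _ := by ring
  have hb : |(-(l1 * lI) * (lR - l1) - l1 * lR * lI) / lI| ≤ 3 * K ^ 2 * r ^ 2 := by
    have hlI := h.lI_pos.ne'
    calc |(-(l1 * lI) * (lR - l1) - l1 * lR * lI) / lI| = |l1 * (l1 - 2 * lR)| := by
          congr 1; field_simp; ring
      _ ≤ |l1| * (|l1| + 2 * |lR|) := by
          rw [abs_mul]
          gcongr
          exact (abs_sub _ _).trans_eq (by rw [abs_mul, abs_two])
      _ ≤ K * r ^ 2 * (K * r ^ 2 + 2 * (K * r ^ 2)) := by
          gcongr <;> first | exact h.abs_l1 | exact h.abs_lR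
      _ = 3 * K ^ 2 * r ^ 4 := by ring
      _ ≤ 3 * K ^ 2 * r ^ 2 := by gcongr
  rw [Khat0_eq _ _ _ _ h.lI_pos, Complex.norm_real, Real.norm_eq_abs]
  have hfin : decay κ r t ^ 3 * ((K ^ 2 + 4) * r ^ 2
      + (2 * K ^ 3 + 4 * K) * r ^ 3 * (2 / r * |Real.sin (lI * t)|) + 3 * K ^ 2 * r ^ 2)
      ≤ r ^ 2 * ((4 * K ^ 3 + 4 * K ^ 2 + 8 * K + 4) * decay κ r t) := by
    have hE3 : decay κ r t ^ 3 ≤ decay κ r t := by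
      simpa using pow_le_pow_of_le_one hE.le hE1 (by norm_num : 1 ≤ 3)
    have hs := Real.abs_sin_le_one (lI * t)
    calc _ ≤ decay κ r t * ((K ^ 2 + 4) * r ^ 2
      + (2 * K ^ 3 + 4 * K) * r ^ 3 * (2 / r * 1) + 3 * K ^ 2 * r ^ 2) := by gcongr
      _ = _ := by field_simp; ring
  refine (h.abs_div_kernelDenom_le ((h.abs_numerator_le ht hw ha hb).trans hfin)).trans_eq ?_
  ring

lemma norm_Khat1_le (hκ : 0 < κ) (h : RootBounds κ K r l1 lR lI) (ht : 0 ≤ t) :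
    ‖Khat1 (l1 : ℂ) ((lR : ℂ) + (lI : ℂ) * Complex.I) ((lR : ℂ) - (lI : ℂ) * Complex.I) t‖
      ≤ 4 * (4 * K + (8 * K ^ 2 + 8) * (1 + K * (6 / κ)))
        * (1 + |Real.sin (r * t)| / r) * decay κ r t := by
  have hr := h.r_pos
  have hr1 := h.r_le
  have hK := h.one_le
  have hE := decay_pos κ r t
  have hE1 := decay_le_one (r := r) hκ ht
  have hr2 : r ^ 4 ≤ r ^ 2 := pow_le_pow_of_le_one hr.le hr1 (by norm_num)
  have hw : |2 * lR| ≤ 2 * K * r ^ 2 := by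
    rw [abs_mul, abs_two]; linarith [h.abs_lR]
  have ha : |(l1 + lR) * (lR - l1) + -lI * lI| ≤ (4 * K ^ 2 + 4) * r ^ 2 := by
    calc |(l1 + lR) * (lR - l1) + -lI * lI|
        ≤ (|l1| + |lR|) * (|lR| + |l1|) + |lI| * |lI| := by
          refine (abs_add_le _ _).trans ?_
          simp only [abs_mul, abs_neg]
          gcongr
          · exact abs_add_le _ _
          · exact abs_sub _ _
      _ ≤ (K * r ^ 2 + K * r ^ 2) * (K * r ^ 2 + K * r ^ 2) + (2 * r) * (2 * r) := by
          gcongr <;> first | exact h.abs_l1 | exact h.abs_lR | exact h.abs_lI_le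
      _ = 4 * K ^ 2 * r ^ 4 + 4 * r ^ 2 := by ring
      _ ≤ 4 * K ^ 2 * r ^ 2 + 4 * r ^ 2 := by gcongr
      _ = _ := by ring
  have hb : |(-lI * (lR - l1) - (l1 + lR) * lI) / lI| ≤ 2 * K * r ^ 2 := by
    have hlI := h.lI_pos.ne'
    calc |(-lI * (lR - l1) - (l1 + lR) * lI) / lI| = |2 * lR| := by
          rw [← abs_neg]; congr 1; field_simp; ring
      _ ≤ _ := hw
  rw [Khat1_eq _ _ _ _ h.lI_pos, Complex.norm_real, Real.norm_eq_abs, abs_neg]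
  have hsin : decay κ r t * |Real.sin (lI * t)| ≤ |Real.sin (r * t)| + K * (6 / κ) * r := by
    have h1 := mul_le_mul_of_nonneg_left (h.abs_sin_lI_le ht) hE.le
    have h2 := mul_le_mul_of_nonneg_left (mul_decay_le (r := r) (t := t) hκ)
      (by positivity : 0 ≤ K * r)
    have h3 := mul_le_mul_of_nonneg_right hE1 (abs_nonneg (Real.sin (r * t)))
    linarith
  have hfin : decay κ r t ^ 3 * (2 * K * r ^ 2
      + (4 * K ^ 2 + 4) * r ^ 2 * (2 / r * |Real.sin (lI * t)|) + 2 * K * r ^ 2)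
      ≤ r ^ 2 * ((4 * K + (8 * K ^ 2 + 8) * (1 + K * (6 / κ)))
        * (1 + |Real.sin (r * t)| / r) * decay κ r t) := by
    have hE2 : decay κ r t ^ 2 ≤ 1 := pow_le_one₀ hE.le hE1
    have hS : 0 ≤ |Real.sin (r * t)| / r := by positivity
    have hB : 0 ≤ K * (6 / κ) := by positivity
    calc _ = decay κ r t * r ^ 2 * (4 * K * decay κ r t ^ 2
          + (8 * K ^ 2 + 8) / r * (decay κ r t * (decay κ r t * |Real.sin (lI * t)|))) := by
            field_simp; ring
      _ ≤ decay κ r t * r ^ 2 * (4 * K * 1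
          + (8 * K ^ 2 + 8) / r * (1 * (|Real.sin (r * t)| + K * (6 / κ) * r))) := by gcongr
      _ = decay κ r t * r ^ 2 * (4 * K
          + (8 * K ^ 2 + 8) * (|Real.sin (r * t)| / r + K * (6 / κ))) := by field_simp
      _ ≤ decay κ r t * r ^ 2 * (4 * K * (1 + |Real.sin (r * t)| / r)
          + (8 * K ^ 2 + 8) * ((1 + K * (6 / κ)) * (1 + |Real.sin (r * t)| / r))) := by
            refine mul_le_mul_of_nonneg_left (add_le_add ?_ ?_) (by positivity)
            · exact le_mul_of_one_le_right (by positivity) (by linarith)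
            · refine mul_le_mul_of_nonneg_left ?_ (by positivity)
              linarith [mul_nonneg hB hS]
      _ = _ := by ring
  refine (h.abs_div_kernelDenom_le ((h.abs_numerator_le ht hw ha hb).trans hfin)).trans_eq ?_
  ring

lemma norm_Khat2_le (hκ : 0 < κ) (h : RootBounds κ K r l1 lR lI) (ht : 0 ≤ t) :
    ‖Khat2 (l1 : ℂ) ((lR : ℂ) + (lI : ℂ) * Complex.I) ((lR : ℂ) - (lI : ℂ) * Complex.I) t‖
      ≤ 4 * ((2 * K + K ^ 2 * (6 / κ) + 4 * K ^ 2) * (1 + 2 * (6 / κ)) + 4 + 4 * K)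
        * (t * |Real.cos (r * t)| + |Real.sin (r * t)| / r + Real.sin (r * t / 2) ^ 2 / r ^ 2)
        * decay κ r t := by
  have hr := h.r_pos
  have hr1 := h.r_le
  have hK := h.one_le
  have hE := decay_pos κ r t
  have hE1 := decay_le_one (r := r) hκ ht
  have hr2 : r ^ 4 ≤ r ^ 2 := pow_le_pow_of_le_one hr.le hr1 (by norm_num)
  rw [Khat2_eq _ _ _ _ h.lI_pos, Complex.norm_real, Real.norm_eq_abs]
  set B := 6 / κ with hBdef
  have hB : 0 < B := by positivity
  have hTB : r ^ 2 * (t * decay κ r t) ≤ B := mul_decay_le hκ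
  have hsin := h.abs_sin_lI_le ht
  have hcos := h.one_sub_cos_le ht
  have hexp : |Real.exp (l1 * t) - Real.exp (lR * t)| ≤ 2 * K * r ^ 2 * t * decay κ r t ^ 3 := by
    have h1 := abs_exp_sub_exp_le (mul_le_mul_of_nonneg_right h.l1_le ht)
      (mul_le_mul_of_nonneg_right h.lR_le ht)
    rw [decay_cube, ← sub_mul, abs_mul, abs_of_nonneg ht] at h1
    refine h1.trans ?_
    gcongr
    linarith [abs_sub l1 lR, h.abs_l1, h.abs_lR]
  have hdiff : |lR - l1| ≤ 2 * K * r ^ 2 := by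
    linarith [abs_sub lR l1, h.abs_l1, h.abs_lR]
  have hlR := h.exp_lR_le ht
  have htrig : 1 ≤ |Real.cos (r * t)| + 2 * Real.sin (r * t / 2) ^ 2 := by
    have := Real.cos_sq (r * t / 2)
    rw [show 2 * (r * t / 2) = r * t by ring] at this
    linarith [Real.sin_sq_add_cos_sq (r * t / 2), le_abs_self (Real.cos (r * t))]
  have hdsin := h.abs_div_lI_le (Real.sin (lI * t))
  have hlI := h.lI_pos.ne'
  rw [show Real.exp (l1 * t) * 1 + Real.exp (lR * t) *
          ((1 * (lR - l1) + 0 * lI) * (Real.sin (lI * t) / lI)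
            + (0 * (lR - l1) - 1 * lI) / lI * Real.cos (lI * t))
      = (Real.exp (l1 * t) - Real.exp (lR * t)) + Real.exp (lR * t) * (1 - Real.cos (lI * t))
        + Real.exp (lR * t) * ((lR - l1) * (Real.sin (lI * t) / lI)) by field_simp; ring]
  set E := decay κ r t with hEdef
  set S := |Real.sin (r * t)| with hSdef
  set S2 := Real.sin (r * t / 2) ^ 2 with hS2def
  set Co := |Real.cos (r * t)| with hCodef
  have hS : 0 ≤ S := abs_nonneg _
  have hS2 : 0 ≤ S2 := sq_nonneg _
  have hCo : 0 ≤ Co := abs_nonneg _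
  have hT : 0 ≤ t * E := by positivity
  have hsum : |(Real.exp (l1 * t) - Real.exp (lR * t))
        + Real.exp (lR * t) * (1 - Real.cos (lI * t))
        + Real.exp (lR * t) * ((lR - l1) * (Real.sin (lI * t) / lI))|
      ≤ 2 * K * r ^ 2 * t * E ^ 3 + E ^ 3 * (4 * S2 + (K * r ^ 3 * t) ^ 2)
        + E ^ 3 * (2 * K * r ^ 2 * (2 / r * (S + K * r ^ 3 * t))) := by
    refine (abs_add_three _ _ _).trans (add_le_add (add_le_add hexp ?_) ?_)
    · rw [abs_mul, abs_of_pos (Real.exp_pos _)]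
      gcongr
    · rw [abs_mul, abs_of_pos (Real.exp_pos _), abs_mul]
      gcongr
      exact hdsin.trans (by gcongr)
  -- All occurrences of `t` are brought into the form `t E`, with one factor `E` set aside.
  have hbr : 2 * K * (r ^ 2 * (t * E)) * E + (4 * S2 * E ^ 2 + K ^ 2 * r ^ 2 * (r ^ 2 * (t * E)) ^ 2)
        + (4 * K * r * S * E ^ 2 + 4 * K ^ 2 * r ^ 4 * (t * E) * E)
      ≤ r ^ 2 * (t * E) * (2 * K + K ^ 2 * B + 4 * K ^ 2) + 4 * S2 + 4 * K * r * S := by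
    have hE2 : E ^ 2 ≤ 1 := pow_le_one₀ hE.le hE1
    have hr21 : r ^ 2 ≤ 1 := pow_le_one₀ hr.le hr1
    calc _ ≤ 2 * K * (r ^ 2 * (t * E)) * 1
          + (4 * S2 * 1 + K ^ 2 * 1 * ((r ^ 2 * (t * E)) * B))
          + (4 * K * r * S * 1 + 4 * K ^ 2 * r ^ 2 * (t * E) * 1) := by
            rw [sq (r ^ 2 * (t * E))]
            gcongr
      _ = _ := by ring
  have hTle : r ^ 2 * (t * E) ≤ r ^ 2 * (t * Co) + 2 * B * S2 := by
    calc r ^ 2 * (t * E) = r ^ 2 * (t * E) * 1 := by ring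
      _ ≤ r ^ 2 * (t * E) * (Co + 2 * S2) := by gcongr
      _ = r ^ 2 * (t * E) * Co + 2 * (r ^ 2 * (t * E)) * S2 := by ring
      _ ≤ r ^ 2 * (t * 1) * Co + 2 * B * S2 := by gcongr
      _ = _ := by ring
  have hfin : 2 * K * r ^ 2 * t * E ^ 3 + E ^ 3 * (4 * S2 + (K * r ^ 3 * t) ^ 2)
        + E ^ 3 * (2 * K * r ^ 2 * (2 / r * (S + K * r ^ 3 * t)))
      ≤ r ^ 2 * (((2 * K + K ^ 2 * B + 4 * K ^ 2) * (1 + 2 * B) + 4 + 4 * K)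
        * (t * Co + S / r + S2 / r ^ 2) * E) := by
    set Q := 2 * K + K ^ 2 * B + 4 * K ^ 2 with hQdef
    have hQ : 0 ≤ Q := by positivity
    calc _ = E * (2 * K * (r ^ 2 * (t * E)) * E
          + (4 * S2 * E ^ 2 + K ^ 2 * r ^ 2 * (r ^ 2 * (t * E)) ^ 2)
          + (4 * K * r * S * E ^ 2 + 4 * K ^ 2 * r ^ 4 * (t * E) * E)) := by field_simp; ring
      _ ≤ E * (r ^ 2 * (t * E) * Q + 4 * S2 + 4 * K * r * S) := by gcongr
      _ ≤ E * ((r ^ 2 * (t * Co) + 2 * B * S2) * Q + 4 * S2 + 4 * K * r * S) := by gcongr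
      _ ≤ E * ((Q * (1 + 2 * B) + 4 + 4 * K) * (r ^ 2 * (t * Co) + r * S + S2)) := by
          refine mul_le_mul_of_nonneg_left ?_ hE.le
          have p1 : 0 ≤ r ^ 2 * (t * Co) := by positivity
          have p2 : 0 ≤ r * S := by positivity
          have n1 : 0 ≤ (2 * B * Q + 4 + 4 * K) * (r ^ 2 * (t * Co)) := by positivity
          have n2 : 0 ≤ (Q * (1 + 2 * B) + 4) * (r * S) := by positivity
          have n3 : 0 ≤ (Q + 4 * K) * S2 := by positivity
          linarith
      _ = _ := by field_simp
  refine (h.abs_div_kernelDenom_le (hsum.trans hfin)).trans_eq ?_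
  ring

end RootBounds

theorem blackstock_kernel_pointwise_estimates
    (κ δ γt : ℝ) (hκ : 0 < κ) (hδ : 0 < δ) (hγt : 0 < γt) (hκδ : 2 * κ < δ) :
    ∃ ε₀ C c : ℝ, 0 < ε₀ ∧ 0 < C ∧ 0 < c ∧ ∀ r : ℝ, 0 < r → r ≤ ε₀ →
      ∀ l1 lR lI : ℝ, 0 < lI →
        blackstockCubic κ δ γt r (l1 : ℂ) = 0 →
        blackstockCubic κ δ γt r ((lR : ℂ) + (lI : ℂ) * Complex.I) = 0 →
        ∀ t : ℝ, 0 ≤ t →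
          ‖Khat0 (l1 : ℂ) ((lR : ℂ) + (lI : ℂ) * Complex.I)
              ((lR : ℂ) - (lI : ℂ) * Complex.I) t‖
            ≤ C * Real.exp (-c * r ^ 2 * t) ∧
          ‖Khat1 (l1 : ℂ) ((lR : ℂ) + (lI : ℂ) * Complex.I)
              ((lR : ℂ) - (lI : ℂ) * Complex.I) t‖
            ≤ C * (1 + |Real.sin (r * t)| / r) * Real.exp (-c * r ^ 2 * t) ∧
          ‖Khat2 (l1 : ℂ) ((lR : ℂ) + (lI : ℂ) * Complex.I)
              ((lR : ℂ) - (lI : ℂ) * Complex.I) t‖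
            ≤ C * (t * |Real.cos (r * t)| + |Real.sin (r * t)| / r
                + Real.sin (r * t / 2) ^ 2 / r ^ 2) * Real.exp (-c * r ^ 2 * t) := by
  obtain ⟨ε₀, K, hε₀, hK, hloc⟩ := blackstock_roots_localised hκ hγt hκδ
  set C0 := 4 * (4 * K ^ 3 + 4 * K ^ 2 + 8 * K + 4)
  set C1 := 4 * (4 * K + (8 * K ^ 2 + 8) * (1 + K * (6 / κ)))
  set C2 := 4 * ((2 * K + K ^ 2 * (6 / κ) + 4 * K ^ 2) * (1 + 2 * (6 / κ)) + 4 + 4 * K)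
  have hC0 : 0 < C0 := by positivity
  have hC1 : 0 < C1 := by positivity
  have hC2 : 0 < C2 := by positivity
  refine ⟨ε₀, C0 + C1 + C2, κ / 6, hε₀, by positivity, by positivity, ?_⟩
  intro r hr hrε l1 lR lI hI h1 h2 t ht
  have h := hloc r hr hrε l1 lR lI hI h1 h2
  have hE := Real.exp_pos (-(κ / 6) * r ^ 2 * t)
  refine ⟨(h.norm_Khat0_le hκ ht).trans ?_, (h.norm_Khat1_le hκ ht).trans ?_,
    (h.norm_Khat2_le hκ ht).trans ?_⟩ <;>
  · rw [decay]
    gcongr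
    linarith

end
end

section
/- Fix constants κ, δ, γ̃ > 0 with 2κ < δ. There exist ε₀, C, c > 0 such that for every r with 0 < r ≤ ε₀ and every t ≥ 0: | (cos(λ_I t) e^{λ_R t} − e^{λ₁ t}) / (2λ_R λ₁ − λ_I² − λ_R² − λ₁²) − Ĝ₀(t,r) | ≤ C t^{1/2} e^{-c r² t}, where λ₁ = λ₁(r), λ_R = λ_R(r), λ_I = λ_I(r) and Ĝ₀(t,r) := r^{-2}(e^{-κ r² t} − cos(rt) e^{-(δ/2) r² t}). -/
/-!
The real root `l1` and the pair `lR ± i lI` exhaust the roots of the cubic, so Vieta's relations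
hold. Sign considerations confine `l1` to `(-(δ+κ)r², 0)`, and feeding this back into the cubic
gives `l1 = -κr² + O(r⁴)`, `lR = -(δ/2)r² + O(r⁴)`, `lI = r + O(r³)`, whence the denominator is
`-r² + O(r⁴)`.

With `N` the numerator and `M` its leading part `cos(rt)e^{-(δ/2)r²t} - e^{-κr²t}`, the difference
to be estimated is `N (1/D + 1/r²) - (N - M)/r²`. Here `1/D + 1/r² = O(1)`, and the Lipschitz
bounds for `cos` and for `exp` on a half-line give `N = O(r t e^{-κr²t/2})` and
`N - M = O(r³ t e^{-κr²t/2})`. So the error is `O(r t e^{-κr²t/2})`, and the factor `r√t` is absorbed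
into half of the exponential decay.
-/
/-!
STATEMENT 12. First-order approximation of the coefficient
`(cos(λ_I t)e^{λ_R t} − e^{λ₁ t})/(2λ_Rλ₁ − λ_I² − λ_R² − λ₁²)` by the symbol
`Ĝ₀(t,r) = r⁻²(e^{-κr²t} − cos(rt)e^{-(δ/2)r²t})`, with error `≤ C t^{1/2} e^{-cr²t}`.
-/

noncomputable section

/-- The radial symbol `Ĝ₀(t,r) = r⁻²(e^{-κr²t} − cos(rt) e^{-(δ/2)r²t})`. -/
def Ghat0 (κ δ t r : ℝ) : ℝ :=
  (Real.exp (-κ * r ^ 2 * t) - Real.cos (r * t) * Real.exp (-(δ / 2) * r ^ 2 * t)) / r ^ 2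


/-- Lipschitz bound for `x ↦ e^{xt}` on the half-line `x ≤ -m`. -/
lemma abs_exp_mul_sub_exp_mul_le {a b m t : ℝ} (ha : a ≤ -m) (hb : b ≤ -m) (ht : 0 ≤ t) :
    |Real.exp (a * t) - Real.exp (b * t)| ≤ |a - b| * t * Real.exp (-m * t) := by
  wlog hab : a ≤ b generalizing a b with H
  · rw [abs_sub_comm, abs_sub_comm a b]
    exact H hb ha (le_of_not_ge hab)
  have h1 : Real.exp (a * t) = Real.exp (b * t) * Real.exp ((a - b) * t) := by
    rw [← Real.exp_add]; ring_nf
  have h2 := Real.add_one_le_exp ((a - b) * t)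
  have h3 : Real.exp (b * t) ≤ Real.exp (-m * t) :=
    Real.exp_le_exp.2 (mul_le_mul_of_nonneg_right hb ht)
  have h4 : Real.exp (a * t) ≤ Real.exp (b * t) :=
    Real.exp_le_exp.2 (mul_le_mul_of_nonneg_right hab ht)
  rw [abs_of_nonpos (by linarith), abs_of_nonpos (by linarith)]
  have h5 : 0 ≤ (b - a) * t := mul_nonneg (by linarith) ht
  calc -(Real.exp (a * t) - Real.exp (b * t))
      = Real.exp (b * t) * (1 - Real.exp ((a - b) * t)) := by rw [h1]; ring
    _ ≤ Real.exp (b * t) * ((b - a) * t) := by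
        gcongr
        linarith
    _ ≤ Real.exp (-m * t) * ((b - a) * t) := by gcongr
    _ = -(a - b) * t * Real.exp (-m * t) := by ring

lemma abs_cos_sub_cos_le (x y : ℝ) : |Real.cos x - Real.cos y| ≤ |x - y| := by
  have h := Real.lipschitzWith_cos.dist_le_mul x y
  simpa [Real.dist_eq] using h

/-- Vieta's relations, for the sum of the roots and the sum of their pairwise products, together
with the real equation satisfied by `l1`. -/
lemma blackstockCubic_vieta {κ δ γt r l1 lR lI : ℝ} (hlI : 0 < lI)
    (h1 : blackstockCubic κ δ γt r (l1 : ℂ) = 0)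
    (h2 : blackstockCubic κ δ γt r ((lR : ℂ) + (lI : ℂ) * Complex.I) = 0) :
    l1 ^ 3 + (δ + κ) * r ^ 2 * l1 ^ 2 + (1 + γt * r ^ 2) * r ^ 2 * l1 + κ * r ^ 4 = 0 ∧
    l1 + 2 * lR = -((δ + κ) * r ^ 2) ∧
    2 * l1 * lR + lR ^ 2 + lI ^ 2 = (1 + γt * r ^ 2) * r ^ 2 := by
  have e1 : l1 ^ 3 + (δ + κ) * r ^ 2 * l1 ^ 2 + (1 + γt * r ^ 2) * r ^ 2 * l1 + κ * r ^ 4 = 0 := by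
    unfold blackstockCubic at h1
    exact_mod_cast h1
  unfold blackstockCubic at h2
  generalize hA : (δ + κ) * r ^ 2 = A at *
  generalize hB : (1 + γt * r ^ 2) * r ^ 2 = B at *
  generalize hC : κ * r ^ 4 = K at *
  have hre := congrArg Complex.re h2
  have him := congrArg Complex.im h2
  simp [pow_succ] at hre him
  have f1 : 3 * lR ^ 2 - lI ^ 2 + 2 * A * lR + B = 0 := by
    have : lI * (3 * lR ^ 2 - lI ^ 2 + 2 * A * lR + B) = 0 := by linear_combination him
    exact (mul_eq_zero.1 this).resolve_left hlI.ne'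
  -- The cubic factors as `(x + A + 2 lR) ((x - lR)² + lI²)`, whose second factor is positive.
  have f2 : (l1 + A + 2 * lR) * ((l1 - lR) ^ 2 + lI ^ 2) = 0 := by
    linear_combination e1 - hre - (l1 - lR) * f1
  have f3 : l1 + A + 2 * lR = 0 := (mul_eq_zero.1 f2).resolve_right (by positivity)
  have f4 : l1 = -A - 2 * lR := by linarith
  refine ⟨e1, by linarith, ?_⟩
  rw [f4]; linear_combination -f1

/-- The real root lies in `(-(δ+κ)r², 0)` and equals `-κr²` up to `O(r⁴)`. -/
lemma real_root_bounds {κ δ γt r x : ℝ} (hκ : 0 < κ) (hδ : 0 < δ) (hγt : 0 < γt) (hr : 0 < r)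
    (h : x ^ 3 + (δ + κ) * r ^ 2 * x ^ 2 + (1 + γt * r ^ 2) * r ^ 2 * x + κ * r ^ 4 = 0) :
    -((δ + κ) * r ^ 2) < x ∧ x < 0 ∧
      |x + κ * r ^ 2| ≤ ((δ + κ) ^ 3 + γt * (δ + κ)) * r ^ 4 := by
  have hx0 : x < 0 := by
    by_contra! hx
    have : 0 < x ^ 3 + (δ + κ) * r ^ 2 * x ^ 2 + (1 + γt * r ^ 2) * r ^ 2 * x + κ * r ^ 4 := by
      positivity
    linarith
  have hxa : -((δ + κ) * r ^ 2) < x := by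
    by_contra! hx
    have g1 : x ^ 2 * (x + (δ + κ) * r ^ 2) ≤ 0 :=
      mul_nonpos_of_nonneg_of_nonpos (by positivity) (by linarith)
    have g2 : (1 + γt * r ^ 2) * r ^ 2 * x ≤ (1 + γt * r ^ 2) * r ^ 2 * (-((δ + κ) * r ^ 2)) :=
      mul_le_mul_of_nonneg_left hx (by positivity)
    have g3 : 0 < δ * r ^ 4 + γt * r ^ 6 * (δ + κ) := by positivity
    nlinarith
  refine ⟨hxa, hx0, ?_⟩
  set a := (δ + κ) * r ^ 2 with ha
  have ha0 : 0 < a := by positivity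
  have hu : 0 ≤ x ^ 2 * (x + a) := mul_nonneg (by positivity) (by linarith)
  have hu2 : x ^ 2 * (x + a) ≤ a ^ 2 * a := by
    apply mul_le_mul _ (by linarith) (by linarith) (by positivity)
    nlinarith
  have hv : γt * r ^ 4 * (-x) ≤ γt * r ^ 4 * a := by
    apply mul_le_mul_of_nonneg_left (by linarith) (by positivity)
  have hv0 : 0 ≤ γt * r ^ 4 * (-x) := mul_nonneg (by positivity) (by linarith)
  have key : r ^ 2 * (x + κ * r ^ 2) = -(x ^ 2 * (x + a)) + γt * r ^ 4 * (-x) := by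
    linear_combination h
  have hr2 : 0 < r ^ 2 := by positivity
  have ev : a ^ 2 * a + γt * r ^ 4 * a = r ^ 2 * (((δ + κ) ^ 3 + γt * (δ + κ)) * r ^ 4) := by
    rw [ha]; ring
  have hv1 : 0 ≤ γt * r ^ 4 * a := by positivity
  have hu1 : 0 ≤ a ^ 2 * a := by positivity
  rw [abs_le]
  constructor
  · refine le_of_mul_le_mul_left ?_ hr2
    rw [key]; linarith
  · refine le_of_mul_le_mul_left ?_ hr2
    rw [key]; linarith

/-- Absorption of one factor `r√t` into half of the exponential decay. -/
lemma mul_exp_le_sqrt_mul_exp {κ r t : ℝ} (hκ : 0 < κ) (ht : 0 ≤ t) :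
    r * t * Real.exp (-(κ / 2 * r ^ 2) * t)
      ≤ (1 + 4 / κ) * t ^ ((1 : ℝ) / 2) * Real.exp (-(κ / 4) * r ^ 2 * t) := by
  rw [← Real.sqrt_eq_rpow]
  set s := √t
  have hs : 0 ≤ s := Real.sqrt_nonneg t
  have hst : t = s ^ 2 := (Real.sq_sqrt ht).symm
  have e : Real.exp (-(κ / 2 * r ^ 2) * t)
      = Real.exp (-(κ / 4) * r ^ 2 * t) * Real.exp (-(κ / 4) * r ^ 2 * t) := by
    rw [← Real.exp_add]; ring_nf
  set F := Real.exp (-(κ / 4) * r ^ 2 * t) with hF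
  have hF0 : 0 < F := Real.exp_pos _
  have h1 : r * s ≤ (1 + 4 / κ) * (κ / 4 * (r * s) ^ 2 + 1) := by
    have : (1 + 4 / κ) * (κ / 4 * (r * s) ^ 2 + 1)
        = κ / 4 * (r * s) ^ 2 + 1 + (r * s) ^ 2 + 4 / κ := by
      field_simp
      ring
    rw [this]
    have : 0 < 4 / κ := by positivity
    have : 0 ≤ κ / 4 * (r * s) ^ 2 := by positivity
    nlinarith [sq_nonneg (r * s - 1), sq_nonneg (r * s)]
  have h2 : κ / 4 * (r * s) ^ 2 + 1 ≤ Real.exp (κ / 4 * (r * s) ^ 2) := Real.add_one_le_exp _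
  have h3 : Real.exp (κ / 4 * (r * s) ^ 2) * F = 1 := by
    rw [hF, hst, ← Real.exp_add]; simp; ring
  have h4 : r * s * F ≤ 1 + 4 / κ := by
    calc r * s * F ≤ (1 + 4 / κ) * Real.exp (κ / 4 * (r * s) ^ 2) * F :=
          mul_le_mul_of_nonneg_right (h1.trans (by gcongr)) hF0.le
      _ = 1 + 4 / κ := by rw [mul_assoc, h3, mul_one]
  rw [e]
  calc r * t * (F * F) = (r * s * F) * (s * F) := by rw [hst]; ring
    _ ≤ (1 + 4 / κ) * (s * F) := by gcongr
    _ = _ := by ring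

/-- The error bound with rate `r t e^{-mt}`, derived from expansions of the roots `l1`, `lR`, `lI`
and of the denominator `D` around `-p`, `-q`, `r` and `-r²`. -/
lemma error_le_of_expansions {K1 K2 K3 A m p q r l1 lR lI D t : ℝ}
    (hr : 0 < r) (hr1 : r ≤ 1) (ht : 0 ≤ t)
    (hK1 : 0 ≤ K1) (hK2 : 0 ≤ K2) (hK3 : 0 ≤ K3) (hA : 0 ≤ A) (hlI : 0 < lI)
    (hp : -p ≤ -m) (hq : -q ≤ -m) (h1m : l1 ≤ -m) (hRm : lR ≤ -m)
    (h1 : |l1 - -p| ≤ K1 * r ^ 4) (hR : |lR - -q| ≤ K1 * r ^ 4) (hI : |lI - r| ≤ K2 * r ^ 3)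
    (hR1 : |lR - l1| ≤ A * r ^ 2) (hD : |D + r ^ 2| ≤ K3 * r ^ 4) (hD2 : D ≤ -(r ^ 2 / 2)) :
    |(Real.cos (lI * t) * Real.exp (lR * t) - Real.exp (l1 * t)) / D
        - (Real.exp (-p * t) - Real.cos (r * t) * Real.exp (-q * t)) / r ^ 2|
      ≤ (2 * K3 * (1 + K2 + A) + K2 + 2 * K1) * (r * t * Real.exp (-m * t)) := by
  have x1 := abs_exp_mul_sub_exp_mul_le h1m hp ht
  have x2 := abs_exp_mul_sub_exp_mul_le hRm hq ht
  have x3 := abs_exp_mul_sub_exp_mul_le hRm h1m ht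
  have xR : Real.exp (lR * t) ≤ Real.exp (-m * t) :=
    Real.exp_le_exp.2 (mul_le_mul_of_nonneg_right hRm ht)
  have c1 : |Real.cos (lI * t) - Real.cos (r * t)| ≤ K2 * r ^ 3 * t := by
    refine (abs_cos_sub_cos_le _ _).trans ?_
    rw [← sub_mul, abs_mul, abs_of_nonneg ht]
    gcongr
  have c2 : |Real.cos (lI * t) - 1| ≤ (1 + K2) * r * t := by
    have h := abs_cos_sub_cos_le (lI * t) 0
    rw [Real.cos_zero, sub_zero, abs_of_nonneg (mul_nonneg hlI.le ht)] at h
    refine h.trans ?_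
    gcongr
    have : r ^ 3 ≤ r := pow_le_of_le_one hr.le hr1 (by norm_num)
    nlinarith [le_abs_self (lI - r), mul_le_mul_of_nonneg_left this hK2]
  have c3 := Real.abs_cos_le_one (r * t)
  set E := Real.exp (-m * t)
  set a := Real.exp (lR * t)
  set b := Real.exp (l1 * t)
  set a' := Real.exp (-q * t)
  set b' := Real.exp (-p * t)
  set u := Real.cos (lI * t)
  set v := Real.cos (r * t)
  have hE : 0 < E := Real.exp_pos _
  have ha : 0 < a := Real.exp_pos _
  have r4 : r ^ 4 ≤ r ^ 3 := pow_le_pow_of_le_one hr.le hr1 (by norm_num)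
  have r2 : r ^ 2 ≤ r := pow_le_of_le_one hr.le hr1 (by norm_num)
  have n1 : |u * a - b| ≤ (1 + K2 + A) * (r * t * E) := by
    calc |u * a - b| = |(u - 1) * a + (a - b)| := by ring_nf
      _ ≤ |(u - 1) * a| + |a - b| := abs_add_le _ _
      _ = |u - 1| * a + |a - b| := by rw [abs_mul, abs_of_pos ha]
      _ ≤ ((1 + K2) * r * t) * E + (A * r) * t * E := by
          gcongr
          refine x3.trans ?_
          gcongr
          exact hR1.trans (by gcongr)
      _ = _ := by ring
  have n2 : |(u * a - b) - (v * a' - b')| ≤ (K2 + 2 * K1) * r ^ 3 * t * E := by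
    calc |(u * a - b) - (v * a' - b')| = |((u - v) * a + v * (a - a')) + (b' - b)| := by ring_nf
      _ ≤ |(u - v) * a + v * (a - a')| + |b' - b| := abs_add_le _ _
      _ ≤ |(u - v) * a| + |v * (a - a')| + |b' - b| := by gcongr; exact abs_add_le _ _
      _ = |u - v| * a + |v| * |a - a'| + |b - b'| := by
          rw [abs_mul, abs_mul, abs_of_pos ha, abs_sub_comm b']
      _ ≤ (K2 * r ^ 3 * t) * E + 1 * ((K1 * r ^ 3) * t * E) + (K1 * r ^ 3) * t * E := by
          gcongr
          · refine x2.trans ?_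
            gcongr
            exact hR.trans (by gcongr)
          · refine x1.trans ?_
            gcongr
            exact h1.trans (by gcongr)
      _ = _ := by ring
  have hr2 : 0 < r ^ 2 := by positivity
  have hDn : D < 0 := by linarith
  have d1 : |(D + r ^ 2) / (D * r ^ 2)| ≤ 2 * K3 := by
    rw [abs_div, abs_mul, abs_of_neg hDn, abs_of_pos hr2, div_le_iff₀ (by nlinarith)]
    refine hD.trans ?_
    have : K3 * r ^ 2 * (r ^ 2 / 2) ≤ K3 * r ^ 2 * (-D) := by
      gcongr
      linarith
    linarith
  have split : (u * a - b) / D - (b' - v * a') / r ^ 2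
      = (u * a - b) * ((D + r ^ 2) / (D * r ^ 2)) - ((u * a - b) - (v * a' - b')) / r ^ 2 := by
    field_simp [hDn.ne]
    ring
  rw [split]
  calc _ ≤ |(u * a - b) * ((D + r ^ 2) / (D * r ^ 2))| + |((u * a - b) - (v * a' - b')) / r ^ 2| :=
        abs_sub _ _
    _ = |u * a - b| * |(D + r ^ 2) / (D * r ^ 2)|
        + |(u * a - b) - (v * a' - b')| / r ^ 2 := by
        rw [abs_mul, abs_div _ (r ^ 2), abs_of_pos hr2]
    _ ≤ ((1 + K2 + A) * (r * t * E)) * (2 * K3) + ((K2 + 2 * K1) * r ^ 3 * t * E) / r ^ 2 := by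
        gcongr
    _ = _ := by field_simp; ring

theorem blackstock_J0_first_order_symbol_approximation
    (κ δ γt : ℝ) (hκ : 0 < κ) (hδ : 0 < δ) (hγt : 0 < γt) (hκδ : 2 * κ < δ) :
    ∃ ε₀ C c : ℝ, 0 < ε₀ ∧ 0 < C ∧ 0 < c ∧ ∀ r : ℝ, 0 < r → r ≤ ε₀ →
      ∀ l1 lR lI : ℝ, 0 < lI →
        blackstockCubic κ δ γt r (l1 : ℂ) = 0 →
        blackstockCubic κ δ γt r ((lR : ℂ) + (lI : ℂ) * Complex.I) = 0 →
        ∀ t : ℝ, 0 ≤ t →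
          |(Real.cos (lI * t) * Real.exp (lR * t) - Real.exp (l1 * t)) /
              (2 * lR * l1 - lI ^ 2 - lR ^ 2 - l1 ^ 2) - Ghat0 κ δ t r|
            ≤ C * t ^ ((1 : ℝ) / 2) * Real.exp (-c * r ^ 2 * t) := by
  have hA : 0 < δ + κ := by linarith
  set A := δ + κ with hAdef
  set K1 := A ^ 3 + γt * A with hK1def
  set K2 := γt + 3 * A ^ 2 with hK2def
  set K3 := K2 + A ^ 2 with hK3def
  have hK1 : 0 < K1 := by positivity
  have hK2 : 0 < K2 := by positivity
  have hK3 : 0 < K3 := by positivity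
  -- Smallness makes `K1 r² ≤ κ/2`, which gives the decay rate, and `K3 r² ≤ 1/2`, which keeps the
  -- denominator below `-r²/2`.
  refine ⟨min 1 (min (κ / (2 * K1)) (1 / (2 * K3))),
    (2 * K3 * (1 + K2 + A) + K2 + 2 * K1) * (1 + 4 / κ), κ / 4,
    by positivity, by positivity, by positivity, ?_⟩
  intro r hr hrε l1 lR lI hlI h1 h2 t ht
  obtain ⟨hr1, hrε⟩ := le_min_iff.1 hrε
  obtain ⟨hra, hrb⟩ := le_min_iff.1 hrε
  have r2 : r ^ 2 ≤ r := pow_le_of_le_one hr.le hr1 (by norm_num)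
  have hs1 : K1 * r ^ 2 ≤ κ / 2 := by
    rw [le_div_iff₀ (by positivity)] at hra
    nlinarith
  have hs3 : K3 * r ^ 2 ≤ 1 / 2 := by
    rw [le_div_iff₀ (by positivity)] at hrb
    nlinarith
  obtain ⟨e1, e2, e3⟩ := blackstockCubic_vieta hlI h1 h2
  obtain ⟨b1, b2, b3⟩ := real_root_bounds hκ hδ hγt hr e1
  rw [← hAdef] at b1 b3 e2
  rw [← hK1def] at b3
  have hr2 : 0 < r ^ 2 := by positivity
  have hs1' : K1 * r ^ 4 ≤ κ / 2 * r ^ 2 := by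
    calc K1 * r ^ 4 = K1 * r ^ 2 * r ^ 2 := by ring
      _ ≤ _ := by gcongr
  have hs3' : K3 * r ^ 4 ≤ 1 / 2 * r ^ 2 := by
    calc K3 * r ^ 4 = K3 * r ^ 2 * r ^ 2 := by ring
      _ ≤ _ := by gcongr
  have hR0 : lR < 0 := by linarith
  have hRA : -(A * r ^ 2) < lR := by linarith
  have hδr : 2 * κ * r ^ 2 ≤ δ * r ^ 2 := by gcongr
  have hκr : 0 < κ * r ^ 2 := by positivity
  have hRe : lR - -(δ / 2 * r ^ 2) = -(l1 + κ * r ^ 2) / 2 := by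
    rw [hAdef] at e2; linarith
  have b3' := abs_le.1 b3
  have hq1 : 0 ≤ l1 * lR := mul_nonneg_of_nonpos_of_nonpos b2.le hR0.le
  have hAA : A * r ^ 2 * (A * r ^ 2) = A ^ 2 * r ^ 4 := by ring
  have hq2 : l1 * lR ≤ A ^ 2 * r ^ 4 := by
    rw [← neg_mul_neg, ← hAA]
    exact mul_le_mul (by linarith) (by linarith) (by linarith) (by positivity)
  have hq3 : lR ^ 2 ≤ A ^ 2 * r ^ 4 := by
    rw [← neg_sq, sq, ← hAA]
    exact mul_le_mul (by linarith) (by linarith) (by linarith) (by positivity)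
  have hγr : 0 ≤ γt * r ^ 4 := by positivity
  have hAr : 0 ≤ A ^ 2 * r ^ 4 := by positivity
  have hI2 : |lI ^ 2 - r ^ 2| ≤ K2 * r ^ 4 := by
    have e : lI ^ 2 - r ^ 2 = γt * r ^ 4 - 2 * (l1 * lR) - lR ^ 2 := by linear_combination e3
    have e' : K2 * r ^ 4 = γt * r ^ 4 + 3 * (A ^ 2 * r ^ 4) := by rw [hK2def]; ring
    rw [abs_le, e, e']
    constructor <;> linarith [sq_nonneg lR]
  have hI : |lI - r| ≤ K2 * r ^ 3 := by
    have e : |lI ^ 2 - r ^ 2| = |lI - r| * (lI + r) := by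
      rw [← abs_of_pos (add_pos hlI hr), ← abs_mul]; ring_nf
    refine le_of_mul_le_mul_right ?_ hr
    calc |lI - r| * r ≤ |lI - r| * (lI + r) := by gcongr; linarith
      _ ≤ K2 * r ^ 4 := e ▸ hI2
      _ = _ := by ring
  have hR1 : |lR - l1| ≤ A * r ^ 2 := by rw [abs_le]; constructor <;> linarith
  have hR1sq : (lR - l1) ^ 2 ≤ A ^ 2 * r ^ 4 := by
    rw [← sq_abs]
    calc |lR - l1| ^ 2 ≤ (A * r ^ 2) ^ 2 := by gcongr
      _ = _ := by ring
  have hD : |(2 * lR * l1 - lI ^ 2 - lR ^ 2 - l1 ^ 2) + r ^ 2| ≤ K3 * r ^ 4 := by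
    have := abs_le.1 hI2
    have e : 2 * lR * l1 - lI ^ 2 - lR ^ 2 - l1 ^ 2 + r ^ 2
        = -(lI ^ 2 - r ^ 2) - (lR - l1) ^ 2 := by ring
    have e' : K3 * r ^ 4 = K2 * r ^ 4 + A ^ 2 * r ^ 4 := by rw [hK3def]; ring
    rw [abs_le, e, e']
    constructor <;> linarith [sq_nonneg (lR - l1)]
  have hmain := error_le_of_expansions (m := κ / 2 * r ^ 2) (p := κ * r ^ 2) (q := δ / 2 * r ^ 2)
    hr hr1 ht hK1.le hK2.le hK3.le hA.le hlI (by linarith) (by linarith) (by linarith)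
    (by linarith) (by simpa using b3)
    (by rw [hRe, abs_le]; constructor <;> linarith) hI hR1 hD
    (by have := (abs_le.1 hD).2; linarith)
  have hG : Ghat0 κ δ t r = (Real.exp (-(κ * r ^ 2) * t)
      - Real.cos (r * t) * Real.exp (-(δ / 2 * r ^ 2) * t)) / r ^ 2 := by
    simp only [Ghat0, neg_mul]
  rw [hG]
  refine hmain.trans ?_
  rw [mul_assoc _ (1 + 4 / κ), mul_assoc _ ((1 + 4 / κ) * _)]
  exact mul_le_mul_of_nonneg_left (mul_exp_le_sqrt_mul_exp hκ ht) (by positivity)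

end
end

section
/- Fix constants κ, δ, γ̃ > 0 with 2κ < δ. There exist ε₀, C, c > 0 such that for every r with 0 < r ≤ ε₀, every t ≥ 0 and all complex numbers a₁, a₂: | Ĵ₁(t,r,a₁,a₂) − Ĝ₁(t,r) (a₁ + ((2κ−δ)/2) a₂) | ≤ C e^{-c r² t} (|a₁| + |a₂|), where, writing λ₁ = λ₁(r), λ_R = λ_R(r), λ_I = λ_I(r) and Q := 2λ_R λ₁ − λ_I² − λ_R² − λ₁², one sets Ĵ₁(t,r,a₁,a₂) := (−λ_I² sin(λ_I t) e^{λ_R t} a₁ − (λ_R − λ₁) sin(λ_I t) e^{λ_R t} a₂) / (λ_I Q) and Ĝ₁(t,r) := r^{-1} sin(rt) e^{-(δ/2) r² t}. -/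
/-!
STATEMENT 13. Approximation of the sine part
`Ĵ₁(t,r,a₁,a₂) = (−λ_I² sin(λ_I t)e^{λ_R t} a₁ − (λ_R−λ₁) sin(λ_I t)e^{λ_R t} a₂)/(λ_I Q)`,
`Q = 2λ_Rλ₁ − λ_I² − λ_R² − λ₁²`, by `Ĝ₁(t,r)(a₁ + ((2κ−δ)/2)a₂)` with
`Ĝ₁(t,r) = r⁻¹ sin(rt) e^{-(δ/2)r²t}`.
-/

/-!
The cubic has real coefficients, so its roots `l1`, `lR ± i lI` satisfy Vieta's relations
(`vieta`). From these, `l1 = -κ r² + O(r⁴)`, `lR = -(δ/2) r² + O(r⁴)` and `lI = r + O(r³)`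
(`roots_asymptotics`), with explicit constants.

Put `d = lR - l1`, so that `Q = -(lI² + d²)` and `Ĵ₁ = S (α a₁ + β a₂)`, where
`S = sin (lI t) e^{lR t}`, `α = lI / (lI² + d²)` and `β = d / (lI (lI² + d²))`. The expansions give
`α = 1/r + O(1)` and `β = m/r + O(1)` with `m = (2κ - δ)/2` (`amplitude_a1`, `amplitude_a2`).
Replacing `S` by `sin (r t) e^{-(δ/2) r² t}` costs `O(r³ t) e^{-(δ/4) r² t}`, and
`r² t e^{-(δ/4) r² t} ≤ (8/δ) e^{-(δ/8) r² t}`, so this error survives the division by `r`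
(`oscillation_error`).
-/

noncomputable section

/-- The radial symbol `Ĝ₁(t,r) = r⁻¹ sin(rt) e^{-(δ/2)r²t}`. -/
def Ghat1 (δ t r : ℝ) : ℝ :=
  Real.sin (r * t) * Real.exp (-(δ / 2) * r ^ 2 * t) / r

/-- `Ĵ₁(t,r,a₁,a₂)`. -/
def Jhat1 (l1 lR lI t : ℝ) (a1 a2 : ℂ) : ℂ :=
  (((-lI ^ 2 * Real.sin (lI * t) * Real.exp (lR * t)) /
      (lI * (2 * lR * l1 - lI ^ 2 - lR ^ 2 - l1 ^ 2)) : ℝ) : ℂ) * a1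
    + (((-(lR - l1) * Real.sin (lI * t) * Real.exp (lR * t)) /
      (lI * (2 * lR * l1 - lI ^ 2 - lR ^ 2 - l1 ^ 2)) : ℝ) : ℂ) * a2

/-- Vieta's relations for the real root and the pair of conjugate roots. -/
lemma vieta {κ δ γt r l1 lR lI : ℝ} (hI : 0 < lI)
    (h1 : blackstockCubic κ δ γt r (l1 : ℂ) = 0)
    (h2 : blackstockCubic κ δ γt r ((lR : ℂ) + (lI : ℂ) * Complex.I) = 0) :
    l1 ^ 3 + (δ + κ) * r ^ 2 * l1 ^ 2 + (1 + γt * r ^ 2) * r ^ 2 * l1 + κ * r ^ 4 = 0 ∧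
      l1 + 2 * lR = -((δ + κ) * r ^ 2) ∧
      2 * l1 * lR + lR ^ 2 + lI ^ 2 = (1 + γt * r ^ 2) * r ^ 2 := by
  have e1 : l1 ^ 3 + (δ + κ) * r ^ 2 * l1 ^ 2 + (1 + γt * r ^ 2) * r ^ 2 * l1 + κ * r ^ 4 = 0 := by
    unfold blackstockCubic at h1
    exact_mod_cast h1
  have hsplit : blackstockCubic κ δ γt r ((lR : ℂ) + (lI : ℂ) * Complex.I) =
      ((lR ^ 3 - 3 * lR * lI ^ 2 + (δ + κ) * r ^ 2 * (lR ^ 2 - lI ^ 2)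
        + (1 + γt * r ^ 2) * r ^ 2 * lR + κ * r ^ 4 : ℝ) : ℂ)
      + ((lI * (3 * lR ^ 2 - lI ^ 2 + 2 * ((δ + κ) * r ^ 2) * lR
        + (1 + γt * r ^ 2) * r ^ 2) : ℝ) : ℂ) * Complex.I := by
    unfold blackstockCubic
    push_cast
    linear_combination (3 * (lR : ℂ) * lI ^ 2 + (lI : ℂ) ^ 3 * Complex.I
      + ((δ : ℂ) + κ) * r ^ 2 * lI ^ 2) * Complex.I_sq
  rw [hsplit] at h2
  have hre := congrArg Complex.re h2
  have him := congrArg Complex.im h2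
  simp only [Complex.add_re, Complex.add_im, Complex.re_ofReal_mul, Complex.im_ofReal_mul,
    Complex.ofReal_re, Complex.ofReal_im, Complex.I_re, Complex.I_im, Complex.zero_re,
    Complex.zero_im, mul_zero, mul_one, add_zero, zero_add] at hre him
  have him' : 3 * lR ^ 2 - lI ^ 2 + 2 * ((δ + κ) * r ^ 2) * lR
      + (1 + γt * r ^ 2) * r ^ 2 = 0 := by
    rcases mul_eq_zero.mp him with h | h
    · exact absurd h hI.ne'
    · exact h
  -- The cubic at `l1` factors through the remaining root `-(δ+κ) r² - 2 lR`.
  have hfac : (l1 + (δ + κ) * r ^ 2 + 2 * lR) * ((l1 - lR) ^ 2 + lI ^ 2) = 0 := by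
    linear_combination e1 - hre + (lR - l1) * him'
  have hsum : l1 + 2 * lR = -((δ + κ) * r ^ 2) := by
    rcases mul_eq_zero.mp hfac with h | h
    · linarith
    · have : 0 < (l1 - lR) ^ 2 + lI ^ 2 := by positivity
      exact absurd h this.ne'
  refine ⟨e1, hsum, ?_⟩
  linear_combination 2 * lR * hsum - him'

lemma roots_asymptotics {κ δ γt : ℝ} (hκ : 0 < κ) (hδ : 0 < δ) (hγt : 0 < γt) :
    ∃ M : ℝ, 0 < M ∧ ∀ r : ℝ, 0 < r → (δ + κ) * r ≤ 1 → ∀ l1 lR lI : ℝ, 0 < lI →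
      blackstockCubic κ δ γt r (l1 : ℂ) = 0 →
      blackstockCubic κ δ γt r ((lR : ℂ) + (lI : ℂ) * Complex.I) = 0 →
      |l1 + κ * r ^ 2| ≤ M * r ^ 4 ∧ |lR + δ / 2 * r ^ 2| ≤ M * r ^ 4 ∧
        |lI - r| ≤ M * r ^ 3 := by
  obtain ⟨s, hs⟩ : ∃ s, s = δ + κ := ⟨_, rfl⟩
  have hs0 : 0 < s := by linarith
  have hM1 : 0 < 2 * κ * γt + 4 * κ ^ 2 * s + 8 * κ ^ 3 := by positivity
  set M1 := 2 * κ * γt + 4 * κ ^ 2 * s + 8 * κ ^ 3 with hM1d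
  have hM2 : 0 < γt + (2 * κ + s) ^ 2 + 4 * κ * (2 * κ + s) := by positivity
  set M2 := γt + (2 * κ + s) ^ 2 + 4 * κ * (2 * κ + s) with hM2d
  refine ⟨M1 + M2, by positivity, ?_⟩
  intro r hr hsr l1 lR lI hI h1 h2
  obtain ⟨e1, e2, e3⟩ := vieta hI h1 h2
  rw [← hs] at e1 e2 hsr
  have hr2 : 0 < r ^ 2 := by positivity
  have hr4 : 0 < r ^ 4 := by positivity
  obtain ⟨x, hx⟩ : ∃ x, x = -l1 := ⟨_, rfl⟩
  obtain rfl : l1 = -x := by linarith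
  have hsr2 : s ^ 2 * r ^ 2 ≤ 1 := by
    have : (s * r) ^ 2 ≤ 1 := pow_le_one₀ (by positivity) hsr
    nlinarith
  -- Completing the square bounds the quadratic cofactor of `x` from below.
  have hq : 3 / 4 * r ^ 2 ≤ x ^ 2 - s * r ^ 2 * x + (1 + γt * r ^ 2) * r ^ 2 := by
    have a1 := sq_nonneg (x - s * r ^ 2 / 2)
    have a2 : 0 < γt * r ^ 2 * r ^ 2 := by positivity
    have a3 := mul_le_mul_of_nonneg_right hsr2 hr2.le
    nlinarith
  have hprod : x * (x ^ 2 - s * r ^ 2 * x + (1 + γt * r ^ 2) * r ^ 2) = κ * r ^ 4 := by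
    linear_combination -e1
  have hx0 : 0 < x := by
    by_contra hneg
    have : 0 < κ * r ^ 4 := by positivity
    nlinarith [mul_nonneg (neg_nonneg.mpr (not_lt.mp hneg)) (le_trans (by positivity) hq)]
  have hx2 : x ≤ 2 * κ * r ^ 2 := by
    have a1 := mul_le_mul_of_nonneg_left hq hx0.le
    rw [hprod] at a1
    have a2 : x * r ^ 2 ≤ (2 * κ * r ^ 2) * r ^ 2 := by nlinarith [mul_pos hκ hr4]
    exact le_of_mul_le_mul_right a2 hr2
  have hxx : x ^ 2 ≤ 4 * κ ^ 2 * r ^ 4 := by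
    calc x ^ 2 ≤ (2 * κ * r ^ 2) ^ 2 := by gcongr
      _ = _ := by ring
  have hxxx : x ^ 3 ≤ 8 * κ ^ 3 * r ^ 6 := by
    calc x ^ 3 ≤ (2 * κ * r ^ 2) ^ 3 := by gcongr
      _ = _ := by ring
  have hA : |x - κ * r ^ 2| ≤ M1 * r ^ 4 := by
    have key : (x - κ * r ^ 2) * r ^ 2 = s * r ^ 2 * x ^ 2 - x ^ 3 - γt * r ^ 4 * x := by
      linear_combination hprod
    have b1 : s * r ^ 2 * x ^ 2 ≤ 4 * κ ^ 2 * s * r ^ 6 := by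
      calc s * r ^ 2 * x ^ 2 ≤ s * r ^ 2 * (4 * κ ^ 2 * r ^ 4) := by gcongr
        _ = _ := by ring
    have b2 : γt * r ^ 4 * x ≤ 2 * κ * γt * r ^ 6 := by
      calc γt * r ^ 4 * x ≤ γt * r ^ 4 * (2 * κ * r ^ 2) := by gcongr
        _ = _ := by ring
    have b3 : 0 < s * r ^ 2 * x ^ 2 := by positivity
    have b4 : 0 < γt * r ^ 4 * x := by positivity
    have b5 : 0 < x ^ 3 := by positivity
    have b7 : 0 < 8 * κ ^ 3 * r ^ 6 := by positivity
    have hM : M1 * r ^ 4 * r ^ 2 = 2 * κ * γt * r ^ 6 + 4 * κ ^ 2 * s * r ^ 6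
        + 8 * κ ^ 3 * r ^ 6 := by rw [hM1d]; ring
    rw [abs_le]
    constructor
    · exact le_of_mul_le_mul_right (by linarith) hr2
    · exact le_of_mul_le_mul_right (by linarith) hr2
  obtain ⟨hA1, hA2⟩ := abs_le.mp hA
  have hM2r : 0 < M2 * r ^ 4 := by positivity
  refine ⟨?_, ?_, ?_⟩
  · rw [abs_le]; constructor <;> linarith
  · have : lR + δ / 2 * r ^ 2 = (x - κ * r ^ 2) / 2 := by
      subst hs; linear_combination e2 / 2
    have hM1r : 0 < M1 * r ^ 4 := by positivity
    rw [this, abs_le]; constructor <;> linarith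
  · have hL : |lR| ≤ (2 * κ + s) * r ^ 2 := by
      have : 0 < s * r ^ 2 := by positivity
      rw [abs_le]; constructor <;> linarith
    have hL2 : lR ^ 2 ≤ (2 * κ + s) ^ 2 * r ^ 4 := by
      calc lR ^ 2 = |lR| ^ 2 := (sq_abs _).symm
        _ ≤ ((2 * κ + s) * r ^ 2) ^ 2 := by gcongr
        _ = _ := by ring
    have hxL : |x * lR| ≤ 2 * κ * (2 * κ + s) * r ^ 4 := by
      rw [abs_mul, abs_of_pos hx0]
      calc x * |lR| ≤ (2 * κ * r ^ 2) * ((2 * κ + s) * r ^ 2) := by gcongr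
        _ = _ := by ring
    obtain ⟨c1, c2⟩ := abs_le.mp hxL
    have key : (lI - r) * (lI + r) = γt * r ^ 4 + 2 * (x * lR) - lR ^ 2 := by
      linear_combination e3
    have hsq : |(lI - r) * (lI + r)| ≤ M2 * r ^ 4 := by
      have d1 : 0 < γt * r ^ 4 := by positivity
      have d2 : 0 ≤ (2 * κ + s) ^ 2 * r ^ 4 := by positivity
      have d3 := sq_nonneg lR
      have hM : M2 * r ^ 4 = γt * r ^ 4 + (2 * κ + s) ^ 2 * r ^ 4
        + 2 * (2 * κ * (2 * κ + s) * r ^ 4) := by rw [hM2d]; ring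
      rw [key, hM, abs_le]; constructor <;> linarith
    rw [abs_mul, abs_of_pos (by linarith : 0 < lI + r)] at hsq
    have d4 : |lI - r| * r ≤ (M2 * r ^ 3) * r := by nlinarith [abs_nonneg (lI - r)]
    have d5 := le_of_mul_le_mul_right d4 hr
    have d6 : 0 < M1 * r ^ 3 := by positivity
    linarith

lemma amplitude_a1 {M N r lI d : ℝ} (hM : 0 < M) (hr : 0 < r) (hr1 : r ≤ 1)
    (hlo : r / 2 ≤ lI) (hhi : lI ≤ 2 * r) (hI : |lI - r| ≤ M * r ^ 3)
    (hd : |d| ≤ N * r ^ 2) :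
    |lI / (lI ^ 2 + d ^ 2) - 1 / r| ≤ 4 * (2 * M + N ^ 2) := by
  have hI0 : 0 < lI := by linarith
  have hden : 0 < lI ^ 2 + d ^ 2 := by positivity
  have e : lI / (lI ^ 2 + d ^ 2) - 1 / r
      = (-(lI * (lI - r)) - d ^ 2) / (r * (lI ^ 2 + d ^ 2)) := by
    field_simp; ring
  have hd2 : d ^ 2 ≤ N ^ 2 * r ^ 4 := by
    calc d ^ 2 = |d| ^ 2 := (sq_abs _).symm
      _ ≤ (N * r ^ 2) ^ 2 := by gcongr
      _ = _ := by ring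
  have hn : |-(lI * (lI - r)) - d ^ 2| ≤ (2 * M + N ^ 2) * r ^ 4 := by
    calc |-(lI * (lI - r)) - d ^ 2| ≤ |-(lI * (lI - r))| + |d ^ 2| := abs_sub _ _
      _ = lI * |lI - r| + d ^ 2 := by
          rw [abs_neg, abs_mul, abs_of_pos hI0, abs_of_nonneg (sq_nonneg d)]
      _ ≤ (2 * r) * (M * r ^ 3) + N ^ 2 * r ^ 4 := by gcongr
      _ = _ := by ring
  have hlow : r ^ 3 / 4 ≤ r * (lI ^ 2 + d ^ 2) := by
    calc r ^ 3 / 4 = r * ((r / 2) ^ 2 + 0) := by ring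
      _ ≤ _ := by gcongr; positivity
  rw [e, abs_div, abs_of_pos (by positivity : 0 < r * (lI ^ 2 + d ^ 2)), div_le_iff₀ (by positivity)]
  have hK : 0 ≤ 2 * M + N ^ 2 := by positivity
  calc _ ≤ (2 * M + N ^ 2) * r ^ 4 := hn
    _ = (2 * M + N ^ 2) * r ^ 3 * r := by ring
    _ ≤ (2 * M + N ^ 2) * r ^ 3 * 1 := by gcongr
    _ = 4 * (2 * M + N ^ 2) * (r ^ 3 / 4) := by ring
    _ ≤ _ := by gcongr

lemma amplitude_a2 {M N m r lI d : ℝ} (hM : 0 < M) (hr : 0 < r) (hr1 : r ≤ 1)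
    (hlo : r / 2 ≤ lI) (hhi : lI ≤ 2 * r) (hI : |lI - r| ≤ M * r ^ 3)
    (hd : |d| ≤ N * r ^ 2) (hdm : |d - m * r ^ 2| ≤ 2 * M * r ^ 4) :
    |d / (lI * (lI ^ 2 + d ^ 2)) - m / r| ≤ 8 * (2 * M + 7 * |m| * M + 2 * |m| * N ^ 2) := by
  have hI0 : 0 < lI := by linarith
  have hden : 0 < lI ^ 2 + d ^ 2 := by positivity
  have e : d / (lI * (lI ^ 2 + d ^ 2)) - m / r
      = (r * (d - m * r ^ 2) - m * ((lI - r) * (lI ^ 2 + lI * r + r ^ 2)) - m * (lI * d ^ 2))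
        / (r * (lI * (lI ^ 2 + d ^ 2))) := by
    field_simp; ring
  have hd2 : d ^ 2 ≤ N ^ 2 * r ^ 4 := by
    calc d ^ 2 = |d| ^ 2 := (sq_abs _).symm
      _ ≤ (N * r ^ 2) ^ 2 := by gcongr
      _ = _ := by ring
  have hn : |r * (d - m * r ^ 2) - m * ((lI - r) * (lI ^ 2 + lI * r + r ^ 2)) - m * (lI * d ^ 2)|
      ≤ (2 * M + 7 * |m| * M + 2 * |m| * N ^ 2) * r ^ 5 := by
    calc _ ≤ |r * (d - m * r ^ 2)| + |m * ((lI - r) * (lI ^ 2 + lI * r + r ^ 2))|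
          + |m * (lI * d ^ 2)| := (abs_sub _ _).trans (by gcongr; exact abs_sub _ _)
      _ = r * |d - m * r ^ 2| + |m| * (|lI - r| * (lI ^ 2 + lI * r + r ^ 2))
          + |m| * (lI * d ^ 2) := by
          rw [abs_mul, abs_mul, abs_mul, abs_mul, abs_of_pos hr,
            abs_of_pos (by positivity : 0 < lI ^ 2 + lI * r + r ^ 2),
            abs_of_nonneg (by positivity : 0 ≤ lI * d ^ 2)]
      _ ≤ r * (2 * M * r ^ 4) + |m| * ((M * r ^ 3) * ((2 * r) ^ 2 + (2 * r) * r + r ^ 2))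
          + |m| * ((2 * r) * (N ^ 2 * r ^ 4)) := by gcongr
      _ = _ := by ring
  have hlow : r ^ 4 / 8 ≤ r * (lI * (lI ^ 2 + d ^ 2)) := by
    calc r ^ 4 / 8 = r * ((r / 2) * ((r / 2) ^ 2 + 0)) := by ring
      _ ≤ _ := by gcongr; positivity
  rw [e, abs_div, abs_of_pos (by positivity : 0 < r * (lI * (lI ^ 2 + d ^ 2))),
    div_le_iff₀ (by positivity)]
  have hK : 0 ≤ 2 * M + 7 * |m| * M + 2 * |m| * N ^ 2 := by positivity
  calc _ ≤ (2 * M + 7 * |m| * M + 2 * |m| * N ^ 2) * r ^ 5 := hn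
    _ = (2 * M + 7 * |m| * M + 2 * |m| * N ^ 2) * r ^ 4 * r := by ring
    _ ≤ (2 * M + 7 * |m| * M + 2 * |m| * N ^ 2) * r ^ 4 * 1 := by gcongr
    _ = 8 * (2 * M + 7 * |m| * M + 2 * |m| * N ^ 2) * (r ^ 4 / 8) := by ring
    _ ≤ _ := by gcongr

/-- Mean value bound for `exp`, with the derivative majorised at a common upper bound. -/
lemma abs_exp_sub_exp_le_s13 {x y z : ℝ} (hx : x ≤ z) (hy : y ≤ z) :
    |Real.exp x - Real.exp y| ≤ |x - y| * Real.exp z := by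
  wlog h : y ≤ x generalizing x y
  · rw [abs_sub_comm, abs_sub_comm x]
    exact this hy hx (le_of_not_ge h)
  rw [abs_of_nonneg (sub_nonneg.mpr (Real.exp_le_exp.mpr h)), abs_of_nonneg (sub_nonneg.mpr h)]
  have h1 : Real.exp y = Real.exp x * Real.exp (y - x) := by rw [← Real.exp_add]; ring_nf
  have h2 := Real.add_one_le_exp (y - x)
  calc Real.exp x - Real.exp y = Real.exp x * (1 - Real.exp (y - x)) := by rw [h1]; ring
    _ ≤ Real.exp x * (x - y) := mul_le_mul_of_nonneg_left (by linarith) (Real.exp_pos x).le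
    _ ≤ Real.exp z * (x - y) := by
        have := sub_nonneg.mpr h
        gcongr
    _ = _ := mul_comm _ _

/-- The damped oscillations with exact and with leading-order frequency and damping rate differ
by `O(r)`, up to a slightly slower exponential decay. -/
lemma oscillation_error {M δ r lR lI t : ℝ} (hM : 0 < M) (hδ : 0 < δ) (hr : 0 < r) (hr1 : r ≤ 1)
    (ht : 0 ≤ t) (hR : |lR + δ / 2 * r ^ 2| ≤ M * r ^ 4) (hI : |lI - r| ≤ M * r ^ 3)
    (hsmall : M * r ^ 2 ≤ δ / 4) :
    |Real.sin (lI * t) * Real.exp (lR * t)| ≤ Real.exp (-(δ / 8) * r ^ 2 * t) ∧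
    |Real.sin (lI * t) * Real.exp (lR * t) - Real.sin (r * t) * Real.exp (-(δ / 2) * r ^ 2 * t)|
      ≤ 16 * M / δ * r * Real.exp (-(δ / 8) * r ^ 2 * t) := by
  have hr2t : 0 ≤ r ^ 2 * t := by positivity
  have hlR : lR ≤ -(δ / 4) * r ^ 2 := by
    have := (abs_le.mp hR).2
    nlinarith [mul_le_mul_of_nonneg_right hsmall (sq_nonneg r)]
  have hx : lR * t ≤ -(δ / 4) * r ^ 2 * t := mul_le_mul_of_nonneg_right hlR ht
  have hy : -(δ / 2) * r ^ 2 * t ≤ -(δ / 4) * r ^ 2 * t := by nlinarith [mul_nonneg hδ.le hr2t]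
  have hz : -(δ / 4) * r ^ 2 * t ≤ -(δ / 8) * r ^ 2 * t := by nlinarith [mul_nonneg hδ.le hr2t]
  have hE : Real.exp (lR * t) ≤ Real.exp (-(δ / 4) * r ^ 2 * t) := Real.exp_le_exp.mpr hx
  constructor
  · rw [abs_mul, Real.abs_exp]
    calc _ ≤ 1 * Real.exp (-(δ / 8) * r ^ 2 * t) := by
          exact mul_le_mul (Real.abs_sin_le_one _) (Real.exp_le_exp.mpr (hx.trans hz))
            (Real.exp_pos _).le zero_le_one
      _ = _ := one_mul _
  have hsin : |Real.sin (lI * t) - Real.sin (r * t)| ≤ M * r ^ 3 * t := by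
    calc _ ≤ |lI * t - r * t| := Real.abs_sin_sub_sin_le _ _
      _ = |lI - r| * t := by rw [← sub_mul, abs_mul, abs_of_nonneg ht]
      _ ≤ _ := by gcongr
  have hexp : |Real.exp (lR * t) - Real.exp (-(δ / 2) * r ^ 2 * t)|
      ≤ M * r ^ 4 * t * Real.exp (-(δ / 4) * r ^ 2 * t) := by
    have h0 : lR * t - -(δ / 2) * r ^ 2 * t = (lR + δ / 2 * r ^ 2) * t := by ring
    refine (abs_exp_sub_exp_le_s13 hx hy).trans ?_
    rw [h0, abs_mul, abs_of_nonneg ht]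
    gcongr
  -- `y ≤ e^y` with `y = (δ/8) r² t` absorbs the factor `r² t` into half of the decay rate.
  have habs : r ^ 2 * t * Real.exp (-(δ / 4) * r ^ 2 * t)
      ≤ 8 / δ * Real.exp (-(δ / 8) * r ^ 2 * t) := by
    have h1 : Real.exp (-(δ / 8) * r ^ 2 * t)
        = Real.exp (δ / 8 * r ^ 2 * t) * Real.exp (-(δ / 4) * r ^ 2 * t) := by
      rw [← Real.exp_add]; ring_nf
    have h2 : r ^ 2 * t ≤ 8 / δ * Real.exp (δ / 8 * r ^ 2 * t) := by
      have := Real.add_one_le_exp (δ / 8 * r ^ 2 * t)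
      calc r ^ 2 * t = 8 / δ * (δ / 8 * r ^ 2 * t) := by field_simp
        _ ≤ _ := by gcongr; linarith
    rw [h1, ← mul_assoc]
    gcongr
  calc |Real.sin (lI * t) * Real.exp (lR * t)
        - Real.sin (r * t) * Real.exp (-(δ / 2) * r ^ 2 * t)|
      = |(Real.sin (lI * t) - Real.sin (r * t)) * Real.exp (lR * t)
        + Real.sin (r * t) * (Real.exp (lR * t) - Real.exp (-(δ / 2) * r ^ 2 * t))| := by
        congr 1; ring
    _ ≤ |Real.sin (lI * t) - Real.sin (r * t)| * Real.exp (lR * t)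
        + |Real.sin (r * t)| * |Real.exp (lR * t) - Real.exp (-(δ / 2) * r ^ 2 * t)| := by
        refine (abs_add_le _ _).trans ?_
        rw [abs_mul, abs_mul, Real.abs_exp]
    _ ≤ M * r ^ 3 * t * Real.exp (-(δ / 4) * r ^ 2 * t)
        + 1 * (M * r ^ 4 * t * Real.exp (-(δ / 4) * r ^ 2 * t)) := by
        gcongr
        exact Real.abs_sin_le_one _
    _ = M * r * (1 + r) * (r ^ 2 * t * Real.exp (-(δ / 4) * r ^ 2 * t)) := by ring
    _ ≤ M * r * (1 + 1) * (8 / δ * Real.exp (-(δ / 8) * r ^ 2 * t)) := by gcongr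
    _ = _ := by ring

theorem blackstock_J1_symbol_approximation
    (κ δ γt : ℝ) (hκ : 0 < κ) (hδ : 0 < δ) (hγt : 0 < γt) (hκδ : 2 * κ < δ) :
    ∃ ε₀ C c : ℝ, 0 < ε₀ ∧ 0 < C ∧ 0 < c ∧ ∀ r : ℝ, 0 < r → r ≤ ε₀ →
      ∀ l1 lR lI : ℝ, 0 < lI →
        blackstockCubic κ δ γt r (l1 : ℂ) = 0 →
        blackstockCubic κ δ γt r ((lR : ℂ) + (lI : ℂ) * Complex.I) = 0 →
        ∀ t : ℝ, 0 ≤ t → ∀ a1 a2 : ℂ,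
          ‖Jhat1 l1 lR lI t a1 a2
              - ((Ghat1 δ t r : ℝ) : ℂ) * (a1 + (((2 * κ - δ) / 2 : ℝ) : ℂ) * a2)‖
            ≤ C * Real.exp (-c * r ^ 2 * t) * (‖a1‖ + ‖a2‖) := by
  obtain ⟨M, hM, hroots⟩ := roots_asymptotics hκ hδ hγt
  obtain ⟨m, hm⟩ : ∃ m, m = (2 * κ - δ) / 2 := ⟨_, rfl⟩
  set N := |m| + 2 * M with hN
  set K1 := 4 * (2 * M + N ^ 2) with hK1
  set K2 := 8 * (2 * M + 7 * |m| * M + 2 * |m| * N ^ 2) with hK2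
  set P := 16 * M / δ with hP
  have hN0 : 0 < N := by positivity
  have hK10 : 0 < K1 := by positivity
  have hK20 : 0 < K2 := by positivity
  have hP0 : 0 < P := by positivity
  set W := 1 + (δ + κ) + 2 * M + 4 * M / δ with hW
  have hW0 : 0 < W := by positivity
  refine ⟨1 / W, K1 + P + K2 + |m| * P, δ / 8, by positivity, by positivity, by positivity, ?_⟩
  intro r hr hrε l1 lR lI hI0 h1 h2 t ht a1 a2
  have hrW : r * W ≤ 1 := by rwa [le_div_iff₀ hW0] at hrε
  have p1 : 0 < r * (δ + κ) := by positivity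
  have p2 : 0 < r * (2 * M) := by positivity
  have p3 : 0 < r * (4 * M / δ) := by positivity
  have hrW' : r + r * (δ + κ) + r * (2 * M) + r * (4 * M / δ) ≤ 1 := by
    rw [hW] at hrW; linarith
  have hr1 : r ≤ 1 := by linarith
  have hMr : M * r ≤ 1 / 2 := by linarith
  have hMrδ : M * r ≤ δ / 4 := by
    have h : r * (4 * M / δ) ≤ 1 := by linarith
    have e : M * r = δ / 4 * (r * (4 * M / δ)) := by field_simp
    rw [e]; nlinarith
  have hMr2 : M * r ^ 2 ≤ M * r := by
    calc M * r ^ 2 = M * r * r := by ring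
      _ ≤ M * r * 1 := by gcongr
      _ = _ := mul_one _
  obtain ⟨b1, bR, bI⟩ := hroots r hr (by linarith) l1 lR lI hI0 h1 h2
  have hdist : M * r ^ 3 ≤ r / 2 := by
    calc M * r ^ 3 = M * r ^ 2 * r := by ring
      _ ≤ 1 / 2 * r := by gcongr; linarith
      _ = _ := by ring
  have hlo : r / 2 ≤ lI := by have := (abs_le.mp bI).1; linarith
  have hhi : lI ≤ 2 * r := by have := (abs_le.mp bI).2; linarith
  obtain ⟨d, hd⟩ : ∃ d, d = lR - l1 := ⟨_, rfl⟩
  have hdm : |d - m * r ^ 2| ≤ 2 * M * r ^ 4 := by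
    have e : d - m * r ^ 2 = (lR + δ / 2 * r ^ 2) - (l1 + κ * r ^ 2) := by rw [hd, hm]; ring
    rw [e]
    refine (abs_sub _ _).trans ?_
    linarith
  have hdN : |d| ≤ N * r ^ 2 := by
    calc |d| = |(d - m * r ^ 2) + m * r ^ 2| := by congr 1; ring
      _ ≤ |d - m * r ^ 2| + |m * r ^ 2| := abs_add_le _ _
      _ ≤ 2 * M * r ^ 4 + |m| * r ^ 2 := by rw [abs_mul m, abs_of_pos (by positivity : 0 < r ^ 2)]; gcongr
      _ = 2 * M * r ^ 2 * r ^ 2 + |m| * r ^ 2 := by ring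
      _ ≤ 2 * M * 1 * r ^ 2 + |m| * r ^ 2 := by gcongr; exact pow_le_one₀ hr.le hr1
      _ = _ := by rw [hN]; ring
  have hα := amplitude_a1 hM hr hr1 hlo hhi bI hdN
  have hβ := amplitude_a2 hM hr hr1 hlo hhi bI hdN hdm
  obtain ⟨hS, hSG⟩ := oscillation_error hM hδ hr hr1 ht bR bI (hMr2.trans hMrδ)
  have hQ : 2 * lR * l1 - lI ^ 2 - lR ^ 2 - l1 ^ 2 = -(lI ^ 2 + d ^ 2) := by rw [hd]; ring
  have hden : 0 < lI ^ 2 + d ^ 2 := by positivity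
  obtain ⟨S, hSd⟩ : ∃ S, S = Real.sin (lI * t) * Real.exp (lR * t) := ⟨_, rfl⟩
  obtain ⟨G, hGd⟩ : ∃ G, G = Real.sin (r * t) * Real.exp (-(δ / 2) * r ^ 2 * t) := ⟨_, rfl⟩
  obtain ⟨E, hEd⟩ : ∃ E, E = Real.exp (-(δ / 8) * r ^ 2 * t) := ⟨_, rfl⟩
  have hE0 : 0 < E := hEd ▸ Real.exp_pos _
  rw [← hSd, ← hGd, ← hEd] at hSG
  rw [← hSd, ← hEd] at hS
  have hSG' : |(S - G) / r| ≤ P * E := by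
    rw [abs_div, abs_of_pos hr, div_le_iff₀ hr]
    linarith
  have hc1 : |S * (lI / (lI ^ 2 + d ^ 2)) - G / r| ≤ (K1 + P) * E := by
    calc _ = |S * (lI / (lI ^ 2 + d ^ 2) - 1 / r) + (S - G) / r| := by congr 1; ring
      _ ≤ |S| * |lI / (lI ^ 2 + d ^ 2) - 1 / r| + |(S - G) / r| := by
          rw [← abs_mul]; exact abs_add_le _ _
      _ ≤ E * K1 + P * E := by gcongr
      _ = _ := by ring
  have hc2 : |S * (d / (lI * (lI ^ 2 + d ^ 2))) - G / r * m| ≤ (K2 + |m| * P) * E := by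
    calc _ = |S * (d / (lI * (lI ^ 2 + d ^ 2)) - m / r) + m * ((S - G) / r)| := by
          congr 1; ring
      _ ≤ |S| * |d / (lI * (lI ^ 2 + d ^ 2)) - m / r| + |m| * |(S - G) / r| := by
          rw [← abs_mul, ← abs_mul]; exact abs_add_le _ _
      _ ≤ E * K2 + |m| * (P * E) := by gcongr
      _ = _ := by ring
  have eJ1 : -lI ^ 2 * Real.sin (lI * t) * Real.exp (lR * t)
      / (lI * (2 * lR * l1 - lI ^ 2 - lR ^ 2 - l1 ^ 2)) = S * (lI / (lI ^ 2 + d ^ 2)) := by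
    rw [hQ, hSd]; field_simp
  have eJ2 : -(lR - l1) * Real.sin (lI * t) * Real.exp (lR * t)
      / (lI * (2 * lR * l1 - lI ^ 2 - lR ^ 2 - l1 ^ 2))
      = S * (d / (lI * (lI ^ 2 + d ^ 2))) := by
    rw [hQ, hSd, ← hd]; field_simp
  have eG : Ghat1 δ t r = G / r := by rw [hGd, Ghat1]
  have e : Jhat1 l1 lR lI t a1 a2
        - ((Ghat1 δ t r : ℝ) : ℂ) * (a1 + (((2 * κ - δ) / 2 : ℝ) : ℂ) * a2)
      = ((S * (lI / (lI ^ 2 + d ^ 2)) - G / r : ℝ) : ℂ) * a1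
        + ((S * (d / (lI * (lI ^ 2 + d ^ 2))) - G / r * m : ℝ) : ℂ) * a2 := by
    rw [Jhat1, eJ1, eJ2, eG, ← hm, Complex.ofReal_sub, Complex.ofReal_sub,
      Complex.ofReal_mul (G / r)]
    ring
  rw [e, ← hEd]
  refine (norm_add_le _ _).trans ?_
  rw [norm_mul, norm_mul, Complex.norm_real, Complex.norm_real, Real.norm_eq_abs, Real.norm_eq_abs]
  have q1 : 0 ≤ (K2 + |m| * P) * E * ‖a1‖ := by positivity
  have q2 : 0 ≤ (K1 + P) * E * ‖a2‖ := by positivity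
  calc _ ≤ (K1 + P) * E * ‖a1‖ + (K2 + |m| * P) * E * ‖a2‖ := by gcongr
    _ ≤ _ := by linarith

end
end
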